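/- Let n ≥ 2, let A be the Cartan matrix of type C_n, and let ι be an admissible sequence in I = {1,…,n} adapted to A. Then Ξ_ι = Tab_{C,ι}, i.e. the set of all linear forms obtained by applying finitely many operators S_k to the coordinate functions x_{j_0} coincides exactly with the set of column tableaux of type C. -/

import Mathlib

noncomputable section

/-- The coordinate linear form `x_k` (as a coefficient vector). -/
def xc (k : ℕ) : ℕ → ℚ := fun l => if l = k then 1 else 0

/-- Cartan matrix of type `A_n`. -/
def cartanA (_n : ℕ) (i j : ℕ) : ℤ :=
  if i = j then 2 else if i + 1 = j ∨ j + 1 = i then -1 else 0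

/-- Cartan matrix of type `B_n`. -/
def cartanB (n : ℕ) (i j : ℕ) : ℤ :=
  if i = j then 2
  else if i = n ∧ j = n - 1 then -2
  else if i + 1 = j ∨ j + 1 = i then -1 else 0

/-- Cartan matrix of type `C_n`. -/
def cartanC (n : ℕ) (i j : ℕ) : ℤ :=
  if i = j then 2
  else if i = n - 1 ∧ j = n then -2
  else if i + 1 = j ∨ j + 1 = i then -1 else 0

/-- Cartan matrix of type `D_n`. -/
def cartanD (n : ℕ) (i j : ℕ) : ℤ :=
  if i = j then 2
  else if (i = n - 1 ∧ j = n) ∨ (i = n ∧ j = n - 1) then 0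
  else if (i + 1 = j ∨ j + 1 = i) ∨ (i = n ∧ j = n - 2) ∨ (i = n - 2 ∧ j = n) then -1
  else 0

/-- `ι` (with positions indexed by `k ≥ 1`) takes values in `{1,…,n}`, has no two equal
consecutive entries, and every index occurs infinitely often. -/
def Admissible (n : ℕ) (ι : ℕ → ℕ) : Prop :=
  (∀ k, 1 ≤ k → 1 ≤ ι k ∧ ι k ≤ n) ∧
  (∀ k, 1 ≤ k → ι k ≠ ι (k + 1)) ∧
  (∀ i, 1 ≤ i → i ≤ n → ∀ N, ∃ k, N ≤ k ∧ ι k = i)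

/-- `k^+`: the next position after `k` carrying the same letter. -/
def kplus (ι : ℕ → ℕ) (k : ℕ) : ℕ := sInf {l | k < l ∧ ι l = ι k}

/-- `k^-`: the previous position (`≥ 1`) carrying the same letter, `0` if none. -/
def kminus (ι : ℕ → ℕ) (k : ℕ) : ℕ := sSup {l | 0 < l ∧ l < k ∧ ι l = ι k}

/-- The linear form `β_k` (with `β_0 = 0`). -/
def beta (A : ℕ → ℕ → ℤ) (ι : ℕ → ℕ) (k : ℕ) : ℕ → ℚ :=
  if k = 0 then 0
  else xc k + (∑ j ∈ Finset.Ioo k (kplus ι k), (A (ι k) (ι j) : ℚ) • xc j) + xc (kplus ι k)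

/-- The piecewise-linear operator `S_k`. -/
def Sop (A : ℕ → ℕ → ℤ) (ι : ℕ → ℕ) (k : ℕ) (φ : ℕ → ℚ) : ℕ → ℚ :=
  if 0 < φ k then φ - φ k • beta A ι k
  else φ - φ k • beta A ι (kminus ι k)

/-- Membership in `Ξ_ι`: forms obtained from some `x_{j_0}` by finitely many operators `S_k`. -/
inductive XiMem (A : ℕ → ℕ → ℤ) (ι : ℕ → ℕ) : (ℕ → ℚ) → Prop
  | base (k : ℕ) (hk : 1 ≤ k) : XiMem A ι (xc k)
  | step (k : ℕ) (hk : 1 ≤ k) (φ : ℕ → ℚ) (h : XiMem A ι φ) : XiMem A ι (Sop A ι k φ)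

/-- The set `Ξ_ι`. -/
def Xi (A : ℕ → ℕ → ℤ) (ι : ℕ → ℕ) : Set (ℕ → ℚ) := { φ | XiMem A ι φ }

/-- Forms obtained from a set `g` of generators by finitely many operators `S_k`. -/
inductive XiMemFrom (A : ℕ → ℕ → ℤ) (ι : ℕ → ℕ) (g : Set (ℕ → ℚ)) : (ℕ → ℚ) → Prop
  | base (φ : ℕ → ℚ) (h : φ ∈ g) : XiMemFrom A ι g φ
  | step (k : ℕ) (hk : 1 ≤ k) (φ : ℕ → ℚ) (h : XiMemFrom A ι g φ) :
      XiMemFrom A ι g (Sop A ι k φ)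

/-- `ι` is adapted to the Cartan matrix `A`: for `i ≠ j` with `a_{i,j} ≠ 0`, consecutive
members of the subsequence of `ι` consisting of the letters `i`, `j` are distinct. -/
def Adapted (n : ℕ) (A : ℕ → ℕ → ℤ) (ι : ℕ → ℕ) : Prop :=
  ∀ i j, 1 ≤ i → i ≤ n → 1 ≤ j → j ≤ n → i ≠ j → A i j ≠ 0 →
    ∀ k l, 1 ≤ k → k < l → (ι k = i ∨ ι k = j) → (ι l = i ∨ ι l = j) →
      (∀ m, k < m → m < l → ι m ≠ i ∧ ι m ≠ j) → ι k ≠ ι l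

/-- Position of the first occurrence of the letter `i` in `ι`. -/
def firstOcc (ι : ℕ → ℕ) (i : ℕ) : ℕ := sInf {k | 1 ≤ k ∧ ι k = i}

/-- `p_{i,j} = 1` iff the first occurrence of `i` precedes the first occurrence of `j`. -/
def pval (ι : ℕ → ℕ) (i j : ℕ) : ℕ := if firstOcc ι i < firstOcc ι j then 1 else 0

/-- The function `P(k)` for types A, B, C (and `P(k) = 0` for `k > n`, `k ≤ 1`). -/
def PABC (ι : ℕ → ℕ) (n k : ℕ) : ℕ :=
  if k ≤ n then ∑ t ∈ Finset.Icc 2 k, pval ι t (t - 1) else 0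

/-- The function `P(k)` for type D. -/
def PD (ι : ℕ → ℕ) (n k : ℕ) : ℕ :=
  if k = n then (∑ t ∈ Finset.Icc 2 (n - 2), pval ι t (t - 1)) + pval ι n (n - 2)
  else if k ≤ n then ∑ t ∈ Finset.Icc 2 k, pval ι t (t - 1) else 0

/-- `occPos ι j s`: the position of the `s`-th occurrence of the letter `j` in `ι`
(`0` for `s = 0`). -/
def occPos (ι : ℕ → ℕ) (j : ℕ) : ℕ → ℕ
  | 0 => 0
  | s + 1 => sInf {k | occPos ι j s < k ∧ ι k = j}

/-- The double-indexed coordinate form `x_{s,j}`, with the conventions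
`x_{s,0} = x_{s,n+1} = 0` and `x_{s,j} = 0` for `s ≤ 0`. -/
def xsj (ι : ℕ → ℕ) (n : ℕ) (s : ℤ) (j : ℕ) : ℕ → ℚ :=
  if 1 ≤ s ∧ 1 ≤ j ∧ j ≤ n then xc (occPos ι j s.toNat) else 0

/-- The double-indexed form `β_{s,j}`. -/
def betasj (A : ℕ → ℕ → ℤ) (ι : ℕ → ℕ) (s : ℤ) (j : ℕ) : ℕ → ℚ :=
  beta A ι (occPos ι j s.toNat)

/-- The double-indexed operator `S_{m,j}`. -/
def Ssj (A : ℕ → ℕ → ℤ) (ι : ℕ → ℕ) (m j : ℕ) (φ : ℕ → ℚ) : ℕ → ℚ :=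
  Sop A ι (occPos ι j m) φ

/- Entries of the ordered sets `J_X` are encoded as natural numbers:
an unbarred entry `j ∈ {1,…,n}` is encoded as `j`, a barred entry `j̄` is
encoded as `2n+1-j` (so that `n̄ = n+1, …, 1̄ = 2n` and the total order of
`J_B = J_C` is the numerical order), and the extra symbol `ovl(n+1)` of
types C and D is encoded as `0`. -/

/-- The box of type A. -/
def boxA (ι : ℕ → ℕ) (n : ℕ) (s : ℤ) (j : ℕ) : ℕ → ℚ :=
  xsj ι n (s + (PABC ι n j : ℤ)) j - xsj ι n (s + (PABC ι n (j - 1) : ℤ) + 1) (j - 1)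

/-- The box of type B. -/
def boxB (ι : ℕ → ℕ) (n : ℕ) (s : ℤ) (e : ℕ) : ℕ → ℚ :=
  if e ≤ n then
    xsj ι n (s + (PABC ι n e : ℤ)) e - xsj ι n (s + (PABC ι n (e - 1) : ℤ) + 1) (e - 1)
  else
    xsj ι n (s + (PABC ι n (2 * n - e) : ℤ) + (n : ℤ) - ((2 * n + 1 - e : ℕ) : ℤ) + 1)
        (2 * n - e)
      - xsj ι n (s + (PABC ι n (2 * n + 1 - e) : ℤ) + (n : ℤ) - ((2 * n + 1 - e : ℕ) : ℤ) + 1)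
          (2 * n + 1 - e)

/-- The box of type C (`ovl(n+1)` encoded as `0`). -/
def boxC (ι : ℕ → ℕ) (n : ℕ) (s : ℤ) (e : ℕ) : ℕ → ℚ :=
  if e = 0 then xsj ι n (s + (PABC ι n n : ℤ)) n
  else if e < n then
    xsj ι n (s + (PABC ι n e : ℤ)) e - xsj ι n (s + (PABC ι n (e - 1) : ℤ) + 1) (e - 1)
  else if e = n then
    (2 : ℚ) • xsj ι n (s + (PABC ι n n : ℤ)) n
      - xsj ι n (s + (PABC ι n (n - 1) : ℤ) + 1) (n - 1)
  else if e = n + 1 then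
    xsj ι n (s + (PABC ι n (n - 1) : ℤ) + 1) (n - 1)
      - (2 : ℚ) • xsj ι n (s + (PABC ι n n : ℤ) + 1) n
  else
    xsj ι n (s + (PABC ι n (2 * n - e) : ℤ) + (n : ℤ) - ((2 * n + 1 - e : ℕ) : ℤ) + 1)
        (2 * n - e)
      - xsj ι n (s + (PABC ι n (2 * n + 1 - e) : ℤ) + (n : ℤ) - ((2 * n + 1 - e : ℕ) : ℤ) + 1)
          (2 * n + 1 - e)

/-- The box of type D (`ovl(n+1)` encoded as `0`, `n̄` as `n+1`, `ovl(n-1)` as `n+2`). -/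
def boxD (ι : ℕ → ℕ) (n : ℕ) (s : ℤ) (e : ℕ) : ℕ → ℚ :=
  if e = 0 then xsj ι n (s + (PD ι n n : ℤ)) n
  else if e ≤ n - 2 then
    xsj ι n (s + (PD ι n e : ℤ)) e - xsj ι n (s + (PD ι n (e - 1) : ℤ) + 1) (e - 1)
  else if e = n - 1 then
    xsj ι n (s + (PD ι n (n - 1) : ℤ)) (n - 1) + xsj ι n (s + (PD ι n n : ℤ)) n
      - xsj ι n (s + (PD ι n (n - 2) : ℤ) + 1) (n - 2)
  else if e = n then
    xsj ι n (s + (PD ι n n : ℤ)) n - xsj ι n (s + (PD ι n (n - 1) : ℤ) + 1) (n - 1)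
  else if e = n + 1 then
    xsj ι n (s + (PD ι n (n - 1) : ℤ)) (n - 1) - xsj ι n (s + (PD ι n n : ℤ) + 1) n
  else if e = n + 2 then
    xsj ι n (s + (PD ι n (n - 2) : ℤ) + 1) (n - 2)
      - xsj ι n (s + (PD ι n (n - 1) : ℤ) + 1) (n - 1)
      - xsj ι n (s + (PD ι n n : ℤ) + 1) n
  else
    xsj ι n (s + (PD ι n (2 * n - e) : ℤ) + (n : ℤ) - ((2 * n + 1 - e : ℕ) : ℤ)) (2 * n - e)
      - xsj ι n (s + (PD ι n (2 * n + 1 - e) : ℤ) + (n : ℤ) - ((2 * n + 1 - e : ℕ) : ℤ))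
          (2 * n + 1 - e)

/-- The column tableau `[j_1,…,j_k]_s = Σ_{i=1}^k box_{s+k-i}(j_i)`. -/
def tab (box : ℤ → ℕ → ℕ → ℚ) (s : ℤ) (k : ℕ) (j : ℕ → ℕ) : ℕ → ℚ :=
  ∑ i ∈ Finset.Icc 1 k, box (s + (k : ℤ) - (i : ℤ)) (j i)

/-- The set `Tab_{A,ι}`. -/
def TabA (ι : ℕ → ℕ) (n : ℕ) : Set (ℕ → ℚ) :=
  { T | ∃ (k : ℕ) (s : ℤ) (j : ℕ → ℕ),
      1 ≤ k ∧ k ≤ n ∧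
      (∀ i, 1 ≤ i → i ≤ k → 1 ≤ j i ∧ j i ≤ n + 1) ∧
      (∀ i, 1 ≤ i → i < k → j i < j (i + 1)) ∧
      1 - (PABC ι n k : ℤ) ≤ s ∧
      T = tab (boxA ι n) s k j }

/-- `|·|` on encoded entries of `J_B = J_C`. -/
def absJ (n e : ℕ) : ℕ := if e ≤ n then e else 2 * n + 1 - e

/-- The set `Tab_{B,ι}`. -/
def TabB (ι : ℕ → ℕ) (n : ℕ) : Set (ℕ → ℚ) :=
  { T | ∃ (k : ℕ) (s : ℤ) (j : ℕ → ℕ),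
      1 ≤ k ∧ k ≤ n ∧
      (∀ i, 1 ≤ i → i ≤ k → 1 ≤ j i ∧ j i ≤ 2 * n) ∧
      (∀ i, 1 ≤ i → i < k → j i < j (i + 1)) ∧
      (k = n → ∀ l m, 1 ≤ l → l < m → m ≤ k → absJ n (j l) ≠ absJ n (j m)) ∧
      1 - (PABC ι n k : ℤ) ≤ s ∧
      T = tab (boxB ι n) s k j }

/-- Defining conditions of `Tab_{C,ι}` on the data `(k,s,j)`. -/
def TabCcond (ι : ℕ → ℕ) (n : ℕ) (k : ℕ) (s : ℤ) (j : ℕ → ℕ) : Prop :=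
  (1 ≤ k ∧ k ≤ n - 1 ∧
    (∀ i, 1 ≤ i → i ≤ k → 1 ≤ j i ∧ j i ≤ 2 * n) ∧
    (∀ i, 1 ≤ i → i < k → j i < j (i + 1)) ∧
    1 - (PABC ι n k : ℤ) ≤ s)
  ∨
  (j 1 = 0 ∧ 1 ≤ k ∧ k ≤ n + 1 ∧
    (∀ i, 2 ≤ i → i ≤ k → n + 1 ≤ j i ∧ j i ≤ 2 * n) ∧
    (∀ i, 2 ≤ i → i < k → j i < j (i + 1)) ∧
    1 - (PABC ι n n : ℤ) ≤ s)

/-- The set `Tab_{C,ι}`. -/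
def TabC (ι : ℕ → ℕ) (n : ℕ) : Set (ℕ → ℚ) :=
  { T | ∃ k s j, TabCcond ι n k s j ∧ T = tab (boxC ι n) s k j }

/-- The partial order on (encoded) `J_D`: `a ≤ b` iff `a = b`, or `a < b` numerically and
`(a,b)` is not the incomparable pair `(n, n̄)`. -/
def leD (n a b : ℕ) : Prop := a = b ∨ (a < b ∧ ¬(a = n ∧ b = n + 1))

/-- Defining conditions of `Tab_{D,ι}` on the data `(k,s,j)`. -/
def TabDcond (ι : ℕ → ℕ) (n : ℕ) (k : ℕ) (s : ℤ) (j : ℕ → ℕ) : Prop :=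
  (1 ≤ k ∧ k ≤ n - 2 ∧
    (∀ i, 1 ≤ i → i ≤ k → 1 ≤ j i ∧ j i ≤ 2 * n) ∧
    (∀ i, 1 ≤ i → i < k → ¬ leD n (j (i + 1)) (j i)) ∧
    1 - (PD ι n k : ℤ) ≤ s)
  ∨
  (j 1 = 0 ∧ 1 ≤ k ∧ k ≤ n + 1 ∧
    (∀ i, 2 ≤ i → i ≤ k → n + 1 ≤ j i ∧ j i ≤ 2 * n) ∧
    (∀ i, 2 ≤ i → i < k → j i < j (i + 1)) ∧
    (k % 2 = 0 → 1 - (PD ι n (n - 1) : ℤ) ≤ s) ∧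
    (k % 2 = 1 → 1 - (PD ι n n : ℤ) ≤ s))

/-- The set `Tab_{D,ι}`. -/
def TabD (ι : ℕ → ℕ) (n : ℕ) : Set (ℕ → ℚ) :=
  { T | ∃ k s j, TabDcond ι n k s j ∧ T = tab (boxD ι n) s k j }

end

/-! Numbering the occurrences of each letter `j` from `1 - P(j)` instead of `1` makes the forms `β`
and the boxes independent of `ι`: a box is a difference of two neighbouring nodes of the diagram
`A_{2n-1}` folded onto `C_n`, and replacing an entry of a column by the next one subtracts a
multiple of a single `β`. The coefficient of a column at `x_k` counts the entries that can be
raised along `β_k`, minus those that can be lowered along `β_{k^-}`. Hence `S_k` moves exactly these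
entries, and on a spin column it may also add or delete a topmost entry `n̄`. So the tableaux are
closed under all `S_k`.

Conversely, a column with entries `1, …, k` is a coordinate function, and so is a spin column
without barred entries. Every other column is obtained from a lighter one: lower the topmost entry
that is not as small as possible. Applying `S_k` to the result restores the column, unless a barred
entry contributes to the same coefficient; in that case one first moves the barred entry.
-/

section Occurrences

variable {ι : ℕ → ℕ} {i j : ℕ}

theorem Admissible.frequently {n : ℕ} (hι : Admissible n ι) (h1 : 1 ≤ j) (hn : j ≤ n) :
    ∃ᶠ k in Filter.atTop, ι k = j :=
  Filter.frequently_atTop.2 (hι.2.2 j h1 hn)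

theorem occPos_succ_le {r k : ℕ} (h : occPos ι j r < k) (hk : ι k = j) :
    occPos ι j (r + 1) ≤ k :=
  Nat.sInf_le ⟨h, hk⟩

section Frequently

variable (hj : ∃ᶠ k in Filter.atTop, ι k = j)
include hj

theorem occPos_succ_spec (r : ℕ) :
    occPos ι j r < occPos ι j (r + 1) ∧ ι (occPos ι j (r + 1)) = j := by
  obtain ⟨k, hk, hkj⟩ := Filter.frequently_atTop.1 hj (occPos ι j r + 1)
  exact Nat.sInf_mem (s := {k | occPos ι j r < k ∧ ι k = j}) ⟨k, hk, hkj⟩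

theorem strictMono_occPos : StrictMono (occPos ι j) :=
  strictMono_nat_of_lt_succ fun r => (occPos_succ_spec hj r).1

theorem apply_occPos_succ (r : ℕ) : ι (occPos ι j (r + 1)) = j :=
  (occPos_succ_spec hj r).2

theorem occPos_succ_pos (r : ℕ) : 1 ≤ occPos ι j (r + 1) :=
  (Nat.zero_le _).trans_lt (occPos_succ_spec hj r).1

theorem exists_occPos_succ_eq {k : ℕ} (hk : 1 ≤ k) (hkj : ι k = j) :
    ∃ r, occPos ι j (r + 1) = k := by
  have hunbounded : ∃ r, k ≤ occPos ι j (r + 1) :=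
    ⟨k, (Nat.le_succ k).trans (strictMono_occPos hj).le_apply⟩
  classical
  refine ⟨Nat.find hunbounded, (occPos_succ_le ?_ hkj).antisymm (Nat.find_spec hunbounded)⟩
  rcases hr : Nat.find hunbounded with _ | r
  · exact hk
  · exact not_le.1 (Nat.find_min hunbounded (hr ▸ r.lt_succ_self))

theorem kplus_occPos (r : ℕ) : kplus ι (occPos ι j (r + 1)) = occPos ι j (r + 2) := by
  rw [kplus, apply_occPos_succ hj]
  rfl

theorem kminus_occPos (r : ℕ) : kminus ι (occPos ι j (r + 1)) = occPos ι j r := by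
  rw [kminus, apply_occPos_succ hj]
  have hbelow : ∀ l, 0 < l ∧ l < occPos ι j (r + 1) ∧ ι l = j → l ≤ occPos ι j r := by
    rintro l ⟨-, hlt, hl⟩
    by_contra! h
    exact hlt.not_ge (occPos_succ_le h hl)
  rcases r with _ | r
  · refine (congrArg sSup (Set.eq_empty_of_forall_notMem fun l hl => ?_)).trans csSup_empty
    exact hl.1.not_ge (hbelow l hl)
  · exact IsGreatest.csSup_eq
      ⟨⟨occPos_succ_pos hj r, strictMono_occPos hj (r + 1).lt_succ_self, apply_occPos_succ hj r⟩,
        hbelow⟩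

end Frequently

/-- The letters `i` and `j` both occur infinitely often in `ι` and their occurrences alternate. -/
structure Alternate (ι : ℕ → ℕ) (i j : ℕ) : Prop where
  ne : i ≠ j
  left : ∃ᶠ k in Filter.atTop, ι k = i
  right : ∃ᶠ k in Filter.atTop, ι k = j
  exists_right : ∀ r, ∃ m ∈ Set.Ioo (occPos ι i (r + 1)) (occPos ι i (r + 2)), ι m = j
  exists_left : ∀ r, ∃ m ∈ Set.Ioo (occPos ι j (r + 1)) (occPos ι j (r + 2)), ι m = i

theorem Adapted.exists_mem_Ioo {n : ℕ} {A : ℕ → ℕ → ℤ} (hA : Adapted n A ι)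
    (hi : i ∈ Set.Icc 1 n) (hj : j ∈ Set.Icc 1 n) (hij : i ≠ j) (hne : A i j ≠ 0 ∨ A j i ≠ 0)
    (hfreq : ∃ᶠ k in Filter.atTop, ι k = i) (r : ℕ) :
    ∃ m ∈ Set.Ioo (occPos ι i (r + 1)) (occPos ι i (r + 2)), ι m = j := by
  by_contra! h
  have hnone : ∀ m, occPos ι i (r + 1) < m → m < occPos ι i (r + 2) → ι m ≠ i ∧ ι m ≠ j :=
    fun m h1 h2 => ⟨fun hm => h2.not_ge (occPos_succ_le h1 hm), h m ⟨h1, h2⟩⟩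
  have heq : ι (occPos ι i (r + 1)) = ι (occPos ι i (r + 2)) := by
    simp only [apply_occPos_succ hfreq]
  have hlt := strictMono_occPos hfreq (r + 1).lt_succ_self
  have hfirst := apply_occPos_succ hfreq r
  have hsecond := apply_occPos_succ hfreq (r + 1)
  rcases hne with hne | hne
  · exact hA i j hi.1 hi.2 hj.1 hj.2 hij hne _ _ (occPos_succ_pos hfreq r) hlt
      (.inl hfirst) (.inl hsecond) hnone heq
  · exact hA j i hj.1 hj.2 hi.1 hi.2 hij.symm hne _ _ (occPos_succ_pos hfreq r) hlt
      (.inr hfirst) (.inr hsecond) (fun m h1 h2 => (hnone m h1 h2).symm) heq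

theorem Adapted.alternate {n : ℕ} {A : ℕ → ℕ → ℤ} (hA : Adapted n A ι) (hι : Admissible n ι)
    (hi : i ∈ Set.Icc 1 n) (hj : j ∈ Set.Icc 1 n) (hij : i ≠ j) (hne : A i j ≠ 0) :
    Alternate ι i j where
  ne := hij
  left := hι.frequently hi.1 hi.2
  right := hι.frequently hj.1 hj.2
  exists_right := hA.exists_mem_Ioo hi hj hij (.inl hne) (hι.frequently hi.1 hi.2)
  exists_left := hA.exists_mem_Ioo hj hi hij.symm (.inr hne) (hι.frequently hj.1 hj.2)

namespace Alternate

theorem symm (h : Alternate ι i j) : Alternate ι j i :=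
  ⟨h.ne.symm, h.right, h.left, h.exists_left, h.exists_right⟩

theorem firstOcc_ne (h : Alternate ι i j) : firstOcc ι i ≠ firstOcc ι j := fun heq =>
  h.ne <| by rw [← apply_occPos_succ h.left 0, ← apply_occPos_succ h.right 0]; exact congrArg ι heq

theorem pval_add_pval (h : Alternate ι i j) : pval ι i j + pval ι j i = 1 := by
  rcases h.firstOcc_ne.lt_or_gt with hlt | hlt <;> simp [pval, hlt, hlt.not_gt]

theorem occPos_interleave (h : Alternate ι i j) (hlt : firstOcc ι i < firstOcc ι j) (r : ℕ) :
    occPos ι i (r + 1) < occPos ι j (r + 1) ∧ occPos ι j (r + 1) < occPos ι i (r + 2) := by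
  have next : ∀ r, occPos ι j r < occPos ι i (r + 1) →
      occPos ι j (r + 1) < occPos ι i (r + 2) := fun r hji => by
    obtain ⟨m, ⟨hm1, hm2⟩, hm⟩ := h.exists_right r
    exact (occPos_succ_le (hji.trans hm1) hm).trans_lt hm2
  induction r with
  | zero => exact ⟨hlt, next 0 (occPos_succ_pos h.left 0)⟩
  | succ r ih =>
    obtain ⟨m, ⟨hm1, hm2⟩, hm⟩ := h.exists_left r
    have hlt' : occPos ι i (r + 2) < occPos ι j (r + 2) :=
      (occPos_succ_le (ih.1.trans hm1) hm).trans_lt hm2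
    exact ⟨hlt', next (r + 1) ih.2⟩

theorem occPos_add_pval_mem_Ioo (h : Alternate ι i j) (r : ℕ) :
    occPos ι j (r + 1 + pval ι j i) ∈ Set.Ioo (occPos ι i (r + 1)) (occPos ι i (r + 2)) := by
  rcases h.firstOcc_ne.lt_or_gt with hlt | hlt
  · rw [pval, if_neg hlt.not_gt]
    exact h.occPos_interleave hlt r
  · rw [pval, if_pos hlt]
    exact ⟨(h.symm.occPos_interleave hlt r).2, (h.symm.occPos_interleave hlt (r + 1)).1⟩

theorem filter_Ioo_occPos (h : Alternate ι i j) (r : ℕ) :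
    (Finset.Ioo (occPos ι i (r + 1)) (occPos ι i (r + 2))).filter (ι · = j) =
      {occPos ι j (r + 1 + pval ι j i)} := by
  have not_two : ∀ a b, occPos ι i (r + 1) < occPos ι j (a + 1) →
      occPos ι j (b + 1) < occPos ι i (r + 2) → b ≤ a := fun a b ha hb => by
    by_contra! hab
    obtain ⟨m, ⟨hm1, hm2⟩, hm⟩ := h.exists_left a
    have hmb : occPos ι j (a + 2) ≤ occPos ι j (b + 1) :=
      (strictMono_occPos h.right).monotone (by lia)
    exact (hm2.trans_le (hmb.trans hb.le)).not_ge (occPos_succ_le (ha.trans hm1) hm)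
  obtain ⟨hlow, hhigh⟩ := h.occPos_add_pval_mem_Ioo r
  ext m
  simp only [Finset.mem_filter, Finset.mem_Ioo, Finset.mem_singleton]
  constructor
  · rintro ⟨⟨hm1, hm2⟩, hm⟩
    obtain ⟨t, rfl⟩ := exists_occPos_succ_eq h.right (Nat.one_le_of_lt hm1) hm
    rw [Nat.add_right_comm] at hlow hhigh ⊢
    rw [(not_two _ _ hlow hm2).antisymm (not_two _ _ hm1 hhigh)]
  · rintro rfl
    refine ⟨⟨hlow, hhigh⟩, ?_⟩
    rw [Nat.add_right_comm]
    exact apply_occPos_succ h.right _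

end Alternate

end Occurrences

theorem beta_occPos {n i : ℕ} {A : ℕ → ℕ → ℤ} {ι : ℕ → ℕ} (hι : Admissible n ι)
    (hA : Adapted n A ι) (hi : i ∈ Finset.Icc 1 n) (r : ℕ) :
    beta A ι (occPos ι i (r + 1)) = xc (occPos ι i (r + 1)) +
      (∑ j ∈ (Finset.Icc 1 n).erase i, (A i j : ℚ) • xc (occPos ι j (r + 1 + pval ι j i))) +
      xc (occPos ι i (r + 2)) := by
  have hi' := Finset.mem_Icc.1 hi
  have hfreq := hι.frequently hi'.1 hi'.2
  have hletter : ∀ m ∈ Finset.Ioo (occPos ι i (r + 1)) (occPos ι i (r + 2)),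
      ι m ∈ (Finset.Icc 1 n).erase i := fun m hm => by
    rw [Finset.mem_Ioo] at hm
    exact Finset.mem_erase.2 ⟨fun h => hm.2.not_ge (occPos_succ_le hm.1 h),
      Finset.mem_Icc.2 (hι.1 m (Nat.one_le_of_lt hm.1))⟩
  rw [beta, if_neg (Nat.one_le_iff_ne_zero.1 (occPos_succ_pos hfreq r)), kplus_occPos hfreq,
    apply_occPos_succ hfreq, ← Finset.sum_fiberwise_of_maps_to hletter]
  congr 2
  refine Finset.sum_congr rfl fun j hj => ?_
  rw [Finset.sum_congr rfl (g := fun m => (A i j : ℚ) • xc m) fun m hm => by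
    rw [(Finset.mem_filter.1 hm).2]]
  obtain ⟨hji, hj⟩ := Finset.mem_erase.1 hj
  by_cases hzero : A i j = 0
  · simp [hzero]
  · rw [(hA.alternate hι hi' (Finset.mem_Icc.1 hj) hji.symm hzero).filter_Ioo_occPos,
      Finset.sum_singleton]

section PABC

variable {ι : ℕ → ℕ} {n : ℕ}

theorem PABC_succ {j : ℕ} (hj : 1 ≤ j) (hjn : j + 1 ≤ n) :
    PABC ι n (j + 1) = PABC ι n j + pval ι (j + 1) j := by
  rw [PABC, PABC, if_pos hjn, if_pos (Nat.le_of_succ_le hjn), Finset.sum_Icc_succ_top (by lia),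
    Nat.add_sub_cancel]

theorem PABC_mem_Icc {a b : ℕ} (hab : a ≤ b) (hb : b ≤ n) :
    PABC ι n b ∈ Set.Icc (PABC ι n a) (PABC ι n a + (b - a)) := by
  rw [Set.mem_Icc]
  have h1 : ∀ i j, pval ι i j ≤ 1 := fun i j => by unfold pval; split <;> lia
  induction b, hab using Nat.le_induction with
  | base => simp
  | succ b hab ih =>
    specialize ih (by lia)
    rcases b.eq_zero_or_pos with rfl | hpos
    · obtain rfl : a = 0 := by lia
      simp [PABC, hb]
    · rw [PABC_succ hpos hb]
      have := h1 (b + 1) b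
      lia

end PABC

section ShiftedIndices

/-- The coordinate `x_{t+P(j),j}`: after this shift by `P`, the boxes and the forms `β` are given
by formulas that do not depend on `ι`. -/
noncomputable def shiftedX (ι : ℕ → ℕ) (n : ℕ) (t : ℤ) (j : ℕ) : ℕ → ℚ :=
  xsj ι n (t + PABC ι n j) j

/-- The position in `ι` of the coordinate `shiftedX ι n t j`. -/
noncomputable def shiftedPos (ι : ℕ → ℕ) (n : ℕ) (t : ℤ) (j : ℕ) : ℕ :=
  occPos ι j (t + PABC ι n j).toNat

/-- The form `β_k` of type C at the position `k = shiftedPos ι n t j`. -/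
noncomputable def shiftedBeta (ι : ℕ → ℕ) (n : ℕ) (t : ℤ) (j : ℕ) : ℕ → ℚ :=
  shiftedX ι n t j + shiftedX ι n (t + 1) j - shiftedX ι n (t + 1) (j - 1) +
    (cartanC n j (j + 1) : ℚ) • shiftedX ι n t (j + 1)

/-- The pairs `(t, j)` for which `shiftedX ι n t j` is a coordinate, rather than zero by
convention. -/
structure IsShiftedIndex (ι : ℕ → ℕ) (n : ℕ) (t : ℤ) (j : ℕ) : Prop where
  one_le : 1 ≤ j
  le : j ≤ n
  one_le_add : 1 ≤ t + PABC ι n j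

variable {ι : ℕ → ℕ} {n j l : ℕ} {t u : ℤ}

@[simp]
theorem shiftedX_zero_right : shiftedX ι n t 0 = 0 := by simp [shiftedX, xsj]

@[simp]
theorem shiftedX_succ_self : shiftedX ι n t (n + 1) = 0 := by simp [shiftedX, xsj]

theorem shiftedX_eq_zero (h : ¬ IsShiftedIndex ι n t j) : shiftedX ι n t j = 0 :=
  if_neg fun h' => h ⟨h'.2.1, h'.2.2, h'.1⟩

namespace IsShiftedIndex

variable (h : IsShiftedIndex ι n t j)
include h

theorem exists_nat : ∃ r : ℕ, t + PABC ι n j = r + 1 :=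
  ⟨(t + PABC ι n j - 1).toNat, by have := h.one_le_add; lia⟩

theorem xc_shiftedPos : xc (shiftedPos ι n t j) = shiftedX ι n t j :=
  (if_pos ⟨h.one_le_add, h.one_le, h.le⟩).symm

theorem one_le_shiftedPos (hι : Admissible n ι) : 1 ≤ shiftedPos ι n t j := by
  obtain ⟨r, hr⟩ := h.exists_nat
  rw [shiftedPos, hr]
  exact occPos_succ_pos (hι.frequently h.one_le h.le) r

end IsShiftedIndex

theorem shiftedPos_inj (hι : Admissible n ι) (h : IsShiftedIndex ι n t j)
    (h' : IsShiftedIndex ι n u l) : shiftedPos ι n t j = shiftedPos ι n u l ↔ t = u ∧ j = l := by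
  have hj := hι.frequently h.one_le h.le
  obtain ⟨r, hr⟩ := h.exists_nat
  obtain ⟨r', hr'⟩ := h'.exists_nat
  refine ⟨fun heq => ?_, by rintro ⟨rfl, rfl⟩; rfl⟩
  rw [shiftedPos, shiftedPos, hr, hr'] at heq
  have hletter : j = l := by
    rw [← apply_occPos_succ hj r, ← apply_occPos_succ (hι.frequently h'.one_le h'.le) r']
    exact congrArg ι heq
  subst hletter
  have := (strictMono_occPos hj).injective heq
  exact ⟨by lia, rfl⟩

theorem shiftedX_apply_shiftedPos (hι : Admissible n ι) (h : IsShiftedIndex ι n t j) (u : ℤ)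
    (l : ℕ) : shiftedX ι n u l (shiftedPos ι n t j) = if u = t ∧ l = j then 1 else 0 := by
  by_cases h' : IsShiftedIndex ι n u l
  · rw [← h'.xc_shiftedPos, xc]
    exact if_congr ((shiftedPos_inj hι h h').trans (by tauto)) rfl rfl
  · rw [shiftedX_eq_zero h', if_neg (by rintro ⟨rfl, rfl⟩; exact h' h), Pi.zero_apply]

theorem exists_shiftedPos_eq (hι : Admissible n ι) {k : ℕ} (hk : 1 ≤ k) :
    ∃ t j, IsShiftedIndex ι n t j ∧ shiftedPos ι n t j = k := by
  obtain ⟨h1, hn⟩ := hι.1 k hk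
  obtain ⟨r, hr⟩ := exists_occPos_succ_eq (hι.frequently h1 hn) hk rfl
  refine ⟨r + 1 - PABC ι n (ι k), ι k, ⟨h1, hn, by lia⟩, ?_⟩
  rw [shiftedPos, sub_add_cancel]
  exact hr

theorem cartanC_eq_zero {i j : ℕ} (h : i ≠ j) (h1 : i + 1 ≠ j) (h2 : j + 1 ≠ i) :
    cartanC n i j = 0 := by
  rw [cartanC, if_neg h, if_neg (by lia), if_neg (by lia)]

theorem cartanC_pred {j : ℕ} (h1 : 1 ≤ j) : cartanC n j (j - 1) = -1 := by
  rw [cartanC, if_neg (by lia), if_neg (by lia), if_pos (by lia)]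

theorem cartanC_succ_of_succ_lt (hj : j + 1 < n) : cartanC n j (j + 1) = -1 := by
  rw [cartanC, if_neg (by lia), if_neg (by lia), if_pos (by lia)]

theorem cartanC_pred_self (hn : 1 ≤ n) : cartanC n (n - 1) n = -2 := by
  rw [cartanC, if_neg (by lia), if_pos (by lia)]

theorem xc_occPos_add_pval {r : ℕ} (hj : 1 ≤ j) (hjn : j ≤ n) (hl : 1 ≤ l) (hln : l ≤ n)
    (hadj : j + 1 = l ∨ l + 1 = j) (halt : Alternate ι j l) (hr : t + PABC ι n j = r + 1) :
    xc (occPos ι l (r + 1 + pval ι l j)) = shiftedX ι n (if l < j then t + 1 else t) l := by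
  have hsum := halt.pval_add_pval
  suffices h : (if l < j then t + 1 else t) + PABC ι n l = (r + 1 + pval ι l j : ℕ) by
    rw [shiftedX, xsj, h, if_pos (by lia), Int.toNat_natCast]
  rcases hadj with rfl | rfl
  · rw [if_neg (by lia), PABC_succ hj hln]
    lia
  · rw [PABC_succ hl hjn] at hr
    rw [if_pos (by lia)]
    lia

theorem sum_erase_cartanC_smul {M : Type*} [AddCommGroup M] [Module ℚ M] {f : ℕ → M}
    (hj : 1 ≤ j) (hjn : j ≤ n) (h0 : f 0 = 0) (hn : f (n + 1) = 0) :
    ∑ l ∈ (Finset.Icc 1 n).erase j, (cartanC n j l : ℚ) • f l =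
      (cartanC n j (j + 1) : ℚ) • f (j + 1) - f (j - 1) := by
  rw [Finset.sum_eq_add (j - 1) (j + 1) (by lia), cartanC_pred hj]
  · push_cast
    module
  · intro l hl hfar
    rw [cartanC_eq_zero (Finset.mem_erase.1 hl).1.symm (by lia) (by lia), Int.cast_zero, zero_smul]
  · intro hmem
    obtain rfl : j = 1 := by simp only [Finset.mem_erase, Finset.mem_Icc] at hmem; lia
    simp [h0]
  · intro hmem
    obtain rfl : j = n := by simp only [Finset.mem_erase, Finset.mem_Icc] at hmem; lia
    simp [hn]

theorem beta_shiftedPos (hι : Admissible n ι) (hA : Adapted n (cartanC n) ι)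
    (h : IsShiftedIndex ι n t j) :
    beta (cartanC n) ι (shiftedPos ι n t j) = shiftedBeta ι n t j := by
  have h1 := h.one_le
  have hn := h.le
  obtain ⟨r, hr⟩ := h.exists_nat
  have hneighbour : ∀ l ∈ (Finset.Icc 1 n).erase j,
      (cartanC n j l : ℚ) • xc (occPos ι l (r + 1 + pval ι l j)) =
        (cartanC n j l : ℚ) • shiftedX ι n (if l < j then t + 1 else t) l := fun l hl => by
    obtain ⟨hlj, hl⟩ := Finset.mem_erase.1 hl
    rw [Finset.mem_Icc] at hl
    by_cases hzero : cartanC n j l = 0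
    · simp [hzero]
    · have hadj : j + 1 = l ∨ l + 1 = j := by
        by_contra! hfar
        exact hzero (cartanC_eq_zero hlj.symm hfar.1 hfar.2)
      rw [xc_occPos_add_pval h1 hn hl.1 hl.2 hadj
        (hA.alternate hι ⟨h1, hn⟩ hl hlj.symm hzero) hr]
  have hnext : xc (occPos ι j (r + 2)) = shiftedX ι n (t + 1) j := by
    rw [shiftedX, xsj, add_right_comm, hr, if_pos (by lia)]
    rfl
  have hpos : shiftedPos ι n t j = occPos ι j (r + 1) := by
    rw [shiftedPos, hr]
    rfl
  rw [shiftedBeta, ← h.xc_shiftedPos, hpos, beta_occPos hι hA (Finset.mem_Icc.2 ⟨h1, hn⟩),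
    Finset.sum_congr rfl hneighbour, hnext, sum_erase_cartanC_smul h1 hn (by simp) (by simp),
    if_neg (show ¬ j + 1 < j by lia), if_pos (show j - 1 < j by lia)]
  abel

theorem beta_kminus_shiftedPos (hι : Admissible n ι) (hA : Adapted n (cartanC n) ι)
    (h : IsShiftedIndex ι n t j) :
    beta (cartanC n) ι (kminus ι (shiftedPos ι n t j)) = shiftedBeta ι n (t - 1) j ∨
      beta (cartanC n) ι (kminus ι (shiftedPos ι n t j)) = 0 := by
  obtain ⟨r, hr⟩ := h.exists_nat
  have hprev : kminus ι (shiftedPos ι n t j) = shiftedPos ι n (t - 1) j := by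
    rw [shiftedPos, shiftedPos, hr, show t - 1 + PABC ι n j = r by lia]
    exact kminus_occPos (hι.frequently h.one_le h.le) r
  rw [hprev]
  rcases r with _ | r
  · right
    rw [shiftedPos, show t - 1 + PABC ι n j = 0 by lia]
    exact if_pos rfl
  · exact .inl (beta_shiftedPos hι hA ⟨h.one_le, h.le, by lia⟩)

theorem Sop_shiftedPos_mem (hι : Admissible n ι) (hA : Adapted n (cartanC n) ι)
    (h : IsShiftedIndex ι n t j) {S : Set (ℕ → ℚ)} {φ : ℕ → ℚ} (hφ : φ ∈ S)
    (hpos : 0 < φ (shiftedPos ι n t j) →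
      φ - φ (shiftedPos ι n t j) • shiftedBeta ι n t j ∈ S)
    (hneg : φ (shiftedPos ι n t j) < 0 →
      φ - φ (shiftedPos ι n t j) • shiftedBeta ι n (t - 1) j ∈ S) :
    Sop (cartanC n) ι (shiftedPos ι n t j) φ ∈ S := by
  unfold Sop
  split_ifs with hsign
  · rw [beta_shiftedPos hι hA h]
    exact hpos hsign
  · rcases (not_lt.1 hsign).lt_or_eq with hlt | hzero
    · rcases beta_kminus_shiftedPos hι hA h with hβ | hβ <;> rw [hβ]
      · exact hneg hlt
      · rwa [smul_zero, sub_zero]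
    · rwa [hzero, zero_smul, sub_zero]

theorem shiftedBeta_apply_shiftedPos (hι : Admissible n ι) (h : IsShiftedIndex ι n t j) :
    shiftedBeta ι n t j (shiftedPos ι n t j) = 1 := by
  have := h.one_le
  simp only [shiftedBeta, Pi.add_apply, Pi.sub_apply, Pi.smul_apply,
    shiftedX_apply_shiftedPos hι h]
  split_ifs <;> first | (exfalso; lia) | norm_num

theorem XiMem.of_add_smul_shiftedBeta (hι : Admissible n ι) (hA : Adapted n (cartanC n) ι)
    (h : IsShiftedIndex ι n t j) {φ : ℕ → ℚ} {c : ℚ} (hc : 0 < c)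
    (hzero : φ (shiftedPos ι n t j) = 0)
    (hφ : XiMem (cartanC n) ι (φ + c • shiftedBeta ι n t j)) : XiMem (cartanC n) ι φ := by
  have hcoeff : (φ + c • shiftedBeta ι n t j) (shiftedPos ι n t j) = c := by
    simp [hzero, shiftedBeta_apply_shiftedPos hι h]
  have hstep := hφ.step _ (h.one_le_shiftedPos hι)
  rwa [Sop, hcoeff, if_pos hc, beta_shiftedPos hι hA h, add_sub_cancel_right] at hstep

end ShiftedIndices

section Boxes

/-- The coordinate attached to the node `e` of the diagram `A_{2n-1}`, folded onto the diagram
`C_n` so that `e` and `2n - e` become the same node; the node `n` is fixed by the folding and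
counts twice. -/
noncomputable def foldX (ι : ℕ → ℕ) (n : ℕ) (u : ℤ) (e : ℕ) : ℕ → ℚ :=
  (if e = n then 2 else 1 : ℚ) • shiftedX ι n (u + (e - n : ℕ)) (min e (2 * n - e))

/-- The box with entry `e` in slot `u`, an entry `0` standing for an empty slot. -/
noncomputable def entryBox (ι : ℕ → ℕ) (n : ℕ) (u : ℤ) (e : ℕ) : ℕ → ℚ :=
  if e = 0 then 0 else foldX ι n u e - foldX ι n (u + 1) (e - 1)

variable {ι : ℕ → ℕ} {n j e : ℕ} {u t : ℤ}

@[simp]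
theorem entryBox_zero : entryBox ι n u 0 = 0 := if_pos rfl

theorem foldX_of_lt (he : e < n) : foldX ι n u e = shiftedX ι n u e := by
  rw [foldX, if_neg he.ne, min_eq_left (by lia), one_smul, Nat.sub_eq_zero_of_le he.le,
    Nat.cast_zero, add_zero]

theorem foldX_self : foldX ι n u n = (2 : ℚ) • shiftedX ι n u n := by
  rw [foldX, if_pos rfl, min_eq_left (by lia), Nat.sub_self, Nat.cast_zero, add_zero]

theorem foldX_two_mul_sub (hj : j < n) :
    foldX ι n u (2 * n - j) = shiftedX ι n (u + (n - j)) j := by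
  rw [foldX, if_neg (by lia), min_eq_right (by lia), one_smul, show 2 * n - (2 * n - j) = j by lia,
    show ((2 * n - j - n : ℕ) : ℤ) = n - j by lia]

theorem foldX_succ_self (hn : 1 ≤ n) :
    foldX ι n u (n + 1) = shiftedX ι n (u + 1) (n - 1) := by
  rw [show n + 1 = 2 * n - (n - 1) by lia, foldX_two_mul_sub (by lia)]
  congr 1
  lia

theorem foldX_succ (hj : j < n) :
    foldX ι n u (j + 1) = -(cartanC n j (j + 1) : ℚ) • shiftedX ι n u (j + 1) := by
  rcases Nat.lt_or_ge (j + 1) n with h | h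
  · rw [foldX_of_lt h, cartanC_succ_of_succ_lt h]
    simp
  · obtain rfl : n = j + 1 := by lia
    rw [foldX_self, show cartanC (j + 1) j (j + 1) = -2 from cartanC_pred_self j.succ_pos]
    simp

theorem foldX_two_mul_sub_succ (hj : j < n) :
    foldX ι n u (2 * n - (j + 1)) =
      -(cartanC n j (j + 1) : ℚ) • shiftedX ι n (u + (n - j - 1)) (j + 1) := by
  rcases Nat.lt_or_ge (j + 1) n with h | h
  · rw [foldX_two_mul_sub h, cartanC_succ_of_succ_lt h]
    simp [sub_sub]
  · obtain rfl : n = j + 1 := by lia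
    rw [show 2 * (j + 1) - (j + 1) = j + 1 by lia, foldX_self,
      show cartanC (j + 1) j (j + 1) = -2 from cartanC_pred_self j.succ_pos]
    simp

theorem boxC_eq_entryBox (he : 1 ≤ e) (hen : e ≤ 2 * n) : boxC ι n u e = entryBox ι n u e := by
  rw [entryBox, if_neg (Nat.one_le_iff_ne_zero.1 he)]
  unfold boxC
  split_ifs with h0 hlt hself hsucc
  · lia
  · rw [foldX_of_lt hlt, foldX_of_lt (by lia), shiftedX, shiftedX, add_right_comm]
  · subst hself
    rw [foldX_self, foldX_of_lt (by lia), shiftedX, shiftedX, add_right_comm]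
  · subst hsucc
    rw [foldX_succ_self (by lia), Nat.add_sub_cancel, foldX_self, shiftedX, shiftedX]
    simp only [add_right_comm u 1]
  · obtain ⟨j, hj, rfl⟩ : ∃ j, j + 1 < n ∧ e = 2 * n - j := ⟨2 * n - e, by lia, by lia⟩
    rw [foldX_two_mul_sub (by lia), show 2 * n - j - 1 = 2 * n - (j + 1) by lia,
      foldX_two_mul_sub hj, show 2 * n - (2 * n - j) = j by lia,
      show 2 * n + 1 - (2 * n - j) = j + 1 by lia, shiftedX, shiftedX]
    push_cast
    congr 2 <;> ring

theorem entryBox_sub_succ (hj : 1 ≤ j) (hjn : j < n) :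
    entryBox ι n u j - entryBox ι n u (j + 1) = shiftedBeta ι n u j := by
  rw [entryBox, entryBox, if_neg (by lia), if_neg (by lia), Nat.add_sub_cancel, foldX_of_lt hjn,
    foldX_of_lt hjn, foldX_of_lt (by lia), foldX_succ hjn, shiftedBeta]
  module

theorem entryBox_self_sub_succ (hn : 1 ≤ n) :
    entryBox ι n u n - entryBox ι n u (n + 1) = (2 : ℚ) • shiftedBeta ι n u n := by
  rw [entryBox, entryBox, if_neg (by lia), if_neg (by lia), Nat.add_sub_cancel,
    foldX_succ_self hn, foldX_self, foldX_self, foldX_of_lt (by lia), shiftedBeta,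
    shiftedX_succ_self]
  module

theorem entryBox_two_mul_sub_sub_succ (hj : 1 ≤ j) (hjn : j < n) :
    entryBox ι n u (2 * n - j) - entryBox ι n u (2 * n - j + 1) =
      shiftedBeta ι n (u + (n - j)) j := by
  have hlower : foldX ι n (u + 1) (2 * n - j - 1) =
      -(cartanC n j (j + 1) : ℚ) • shiftedX ι n (u + (n - j)) (j + 1) := by
    rw [show 2 * n - j - 1 = 2 * n - (j + 1) by lia, foldX_two_mul_sub_succ hjn]
    congr 2
    ring
  have hupper : foldX ι n u (2 * n - j + 1) = shiftedX ι n (u + (n - j) + 1) (j - 1) := by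
    rw [show 2 * n - j + 1 = 2 * n - (j - 1) by lia, foldX_two_mul_sub (by lia)]
    congr 1
    lia
  rw [entryBox, entryBox, if_neg (by lia), if_neg (by lia), Nat.add_sub_cancel, hlower, hupper,
    foldX_two_mul_sub hjn, foldX_two_mul_sub hjn, shiftedBeta, add_right_comm u 1]
  module

theorem foldX_apply_shiftedPos (hι : Admissible n ι) (h : IsShiftedIndex ι n t j)
    (he : e ≤ 2 * n) :
    foldX ι n u e (shiftedPos ι n t j) =
      (if u = t ∧ e = j then 1 else 0) + (if u = t - n + j ∧ e = 2 * n - j then 1 else 0) := by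
  have hjn := h.le
  rw [foldX, Pi.smul_apply, shiftedX_apply_shiftedPos hι h, smul_eq_mul]
  split_ifs <;> first | (exfalso; lia) | norm_num

theorem entryBox_apply_shiftedPos (hι : Admissible n ι) (h : IsShiftedIndex ι n t j)
    (he : e ≤ 2 * n) :
    entryBox ι n u e (shiftedPos ι n t j) =
      ((if u = t ∧ e = j then 1 else 0) - (if u = t - 1 ∧ e = j + 1 then 1 else 0)) +
      ((if u = t - n + j ∧ e = 2 * n - j then 1 else 0) -
        (if u = t - 1 - n + j ∧ e = 2 * n - j + 1 then 1 else 0)) := by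
  have hj := h.one_le
  have hjn := h.le
  rcases e.eq_zero_or_pos with rfl | hpos
  · rw [entryBox_zero, Pi.zero_apply]
    split_ifs <;> first | (exfalso; lia) | norm_num
  · rw [entryBox, if_neg hpos.ne', Pi.sub_apply, foldX_apply_shiftedPos hι h he,
      foldX_apply_shiftedPos hι h (by lia)]
    have hbelow : (u + 1 = t ∧ e - 1 = j) = (u = t - 1 ∧ e = j + 1) := propext (by lia)
    have hbar : (u + 1 = t - n + j ∧ e - 1 = 2 * n - j) =
        (u = t - 1 - n + j ∧ e = 2 * n - j + 1) := propext (by lia)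
    simp only [hbelow, hbar]
    ring

end Boxes

section Columns

theorem sum_update_add {α M N : Type*} [Zero M] [AddCommMonoid N] (f : α →₀ M)
    (a : α) (b : M) {g : α → M → N} (hg : ∀ a, g a 0 = 0) :
    (f.update a b).sum g + g a (f a) = f.sum g + g a b := by
  classical
  rw [← Finsupp.add_sum_erase' (f.update a b) a g hg, ← Finsupp.add_sum_erase' f a g hg,
    Finsupp.erase_update_eq_erase, Finsupp.update_apply, if_pos rfl]
  abel

/-- `E` is a column of height `k` with its lowest slot at `s`. The slot `u` carries the entry
`E u`, encoded as in `boxC`, and `E u = 0` marks an empty slot; the slots are numbered by the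
shifts of their boxes, so that the entries decrease as the slot goes up. The entries exceed `b`:
`b = 0` for ordinary columns, `b = n` for the barred part of a spin column. -/
structure IsColumn (b n : ℕ) (s : ℤ) (k : ℕ) (E : ℤ →₀ ℕ) : Prop where
  ne_zero_iff : ∀ u, E u ≠ 0 ↔ s ≤ u ∧ u < s + k
  le : ∀ u, E u ≤ 2 * n
  lt : ∀ u, E u ≠ 0 → b < E u
  succ_lt : ∀ u, E u ≠ 0 → E (u + 1) < E u

/-- The linear form of a column, the sum of its boxes. -/
noncomputable def columnForm (ι : ℕ → ℕ) (n : ℕ) (E : ℤ →₀ ℕ) : ℕ → ℚ :=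
  E.sum (entryBox ι n)

/-- `1` if the entry `e` in slot `u` can be raised, `-1` if the entry `e + 1` in slot `u - 1` can
be lowered, `0` if neither is the case. -/
def stepCoeff (E : ℤ →₀ ℕ) (u : ℤ) (e : ℕ) : ℚ :=
  (if E u = e then 1 else 0) - (if E (u - 1) = e + 1 then 1 else 0)

variable {ι : ℕ → ℕ} {b n k j e : ℕ} {s t u v : ℤ} {E : ℤ →₀ ℕ}

theorem stepCoeff_cases (E : ℤ →₀ ℕ) (u : ℤ) (e : ℕ) :
    (stepCoeff E u e = 1 ∧ E u = e ∧ E (u - 1) ≠ e + 1) ∨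
      (stepCoeff E u e = -1 ∧ E u ≠ e ∧ E (u - 1) = e + 1) ∨ stepCoeff E u e = 0 := by
  unfold stepCoeff
  split_ifs <;> simp_all

theorem sum_support_ite (E : ℤ →₀ ℕ) (u : ℤ) (he : e ≠ 0) :
    ∑ v ∈ E.support, (if v = u ∧ E v = e then 1 else 0 : ℚ) = if E u = e then 1 else 0 := by
  rw [Finset.sum_eq_single u (fun v _ hv => if_neg fun h => hv h.1)]
  · simp
  · intro hu
    rw [Finsupp.notMem_support_iff.1 hu]
    simp [he.symm]

theorem columnForm_apply_shiftedPos (hι : Admissible n ι) (h : IsShiftedIndex ι n t j)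
    (hle : ∀ u, E u ≤ 2 * n) :
    columnForm ι n E (shiftedPos ι n t j) =
      stepCoeff E t j + stepCoeff E (t - n + j) (2 * n - j) := by
  have hj := h.one_le
  have hjn := h.le
  rw [columnForm, Finsupp.sum, Finset.sum_apply]
  simp only [entryBox_apply_shiftedPos hι h (hle _), Finset.sum_add_distrib,
    Finset.sum_sub_distrib]
  rw [sum_support_ite _ _ (by lia), sum_support_ite _ _ (by lia), sum_support_ite _ _ (by lia),
    sum_support_ite _ _ (by lia), stepCoeff, stepCoeff]
  ring_nf

theorem columnForm_update (ι : ℕ → ℕ) (n : ℕ) (E : ℤ →₀ ℕ) (u : ℤ) (e : ℕ) :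
    columnForm ι n (E.update u e) =
      columnForm ι n E - (entryBox ι n u (E u) - entryBox ι n u e) := by
  have h := sum_update_add E u e fun v => entryBox_zero (ι := ι) (n := n) (u := v)
  rw [columnForm, columnForm, eq_sub_of_add_eq h]
  abel

namespace IsColumn

variable (hE : IsColumn b n s k E)
include hE

theorem lt_of_lt (hu : E u ≠ 0) (huv : u < v) : E v < E u := by
  rw [← Int.add_one_le_iff] at huv
  induction v, huv using Int.leInduction with
  | base => exact hE.succ_lt u hu
  | succ v huv ih =>
    have hle : E (v + 1) ≤ E v := by
      rcases eq_or_ne (E (v + 1)) 0 with hzero | hne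
      · lia
      · have := (hE.ne_zero_iff u).1 hu
        have := (hE.ne_zero_iff (v + 1)).1 hne
        exact (hE.succ_lt v ((hE.ne_zero_iff v).2 (by lia))).le
    exact hle.trans_lt ih

theorem add_le_apply {d : ℕ} (hd : 1 ≤ d) (hdk : d ≤ k) : b + d ≤ E (s + k - d) := by
  induction d, hd using Nat.le_induction with
  | base => exact hE.lt _ ((hE.ne_zero_iff _).2 (by lia))
  | succ d hd ih =>
    have hlt := hE.succ_lt (s + k - (d + 1 : ℕ)) ((hE.ne_zero_iff _).2 (by lia))
    rw [show s + k - ((d + 1 : ℕ) : ℤ) + 1 = s + k - d by lia] at hlt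
    have := ih (by lia)
    lia

theorem update (hu : E u ≠ 0) (hbe : b < e) (hen : e ≤ 2 * n)
    (habove : E (u + 1) < e) (hbelow : E (u - 1) ≠ 0 → e < E (u - 1)) :
    IsColumn b n s k (E.update u e) := by
  refine ⟨fun v => ?_, fun v => ?_, fun v => ?_, fun v => ?_⟩ <;>
    simp only [Finsupp.update_apply]
  · split_ifs with hv
    · subst hv
      exact iff_of_true (by lia) ((hE.ne_zero_iff v).1 hu)
    · exact hE.ne_zero_iff v
  · split_ifs
    exacts [hen, hE.le v]
  · split_ifs
    exacts [fun _ => hbe, hE.lt v]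
  · split_ifs with hv hnext hnext
    · lia
    · subst hv
      exact fun _ => habove
    · obtain rfl : v = u - 1 := by lia
      exact hbelow
    · exact hE.succ_lt v

theorem raise (hu : E u = e) (he : e ≠ 0) (hen : e < 2 * n) (hbelow : E (u - 1) ≠ e + 1) :
    IsColumn b n s k (E.update u (e + 1)) := by
  have hne : E u ≠ 0 := hu ▸ he
  have hb := hE.lt u hne
  have habove := hE.succ_lt u hne
  refine hE.update hne (by lia) hen (by lia) fun hprev => ?_
  have := hE.lt_of_lt hprev (sub_one_lt u)
  lia

theorem lower (hu : E u = e + 1) (hbe : b < e) (habove : E (u + 1) ≠ e) :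
    IsColumn b n s k (E.update u e) := by
  have hne : E u ≠ 0 := by lia
  have hle := hE.le u
  have hlt := hE.succ_lt u hne
  refine hE.update hne hbe (by lia) (by lia) fun hprev => ?_
  have := hE.lt_of_lt hprev (sub_one_lt u)
  lia

theorem exists_raise (hj : 1 ≤ j) (hjn : j < n)
    (hpos : 0 < stepCoeff E t j + stepCoeff E (t - n + j) (2 * n - j)) :
    ∃ E', IsColumn b n s k E' ∧ columnForm ι n E' = columnForm ι n E -
      (stepCoeff E t j + stepCoeff E (t - n + j) (2 * n - j)) • shiftedBeta ι n t j := by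
  have hbox := entryBox_sub_succ (ι := ι) (u := t) hj hjn
  have hbar := entryBox_two_mul_sub_sub_succ (ι := ι) (u := t - n + j) hj hjn
  rw [show t - (n : ℤ) + j + (n - j) = t by ring] at hbar
  rcases stepCoeff_cases E t j with ⟨hx, htop, htop'⟩ | ⟨hx, -⟩ | hx <;>
  rcases stepCoeff_cases E (t - n + j) (2 * n - j) with ⟨hy, hbot, hbot'⟩ | ⟨hy, -⟩ | hy <;>
  rw [hx, hy] at hpos ⊢ <;> norm_num at hpos
  · have hraise := hE.raise htop (by lia) (by lia) htop'
    refine ⟨(E.update t (j + 1)).update (t - n + j) (2 * n - j + 1),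
      hraise.raise ?_ (by lia) (by lia) ?_, ?_⟩
    · rw [Finsupp.update_apply, if_neg (by lia), hbot]
    · rwa [Finsupp.update_apply, if_neg (by lia)]
    · rw [columnForm_update, columnForm_update, Finsupp.update_apply, if_neg (by lia), htop, hbot,
        hbox, hbar]
      module
  · refine ⟨E.update t (j + 1), hE.raise htop (by lia) (by lia) htop', ?_⟩
    rw [columnForm_update, htop, hbox]
    module
  · refine ⟨E.update (t - n + j) (2 * n - j + 1), hE.raise hbot (by lia) (by lia) hbot', ?_⟩
    rw [columnForm_update, hbot, hbar]
    module

theorem exists_lower (hb : b = 0 ∨ b = n) (hj : 1 ≤ j) (hjn : j < n)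
    (hneg : stepCoeff E t j + stepCoeff E (t - n + j) (2 * n - j) < 0) :
    ∃ E', IsColumn b n s k E' ∧ columnForm ι n E' = columnForm ι n E -
      (stepCoeff E t j + stepCoeff E (t - n + j) (2 * n - j)) • shiftedBeta ι n (t - 1) j := by
  have hbox := entryBox_sub_succ (ι := ι) (u := t - 1) hj hjn
  have hbar := entryBox_two_mul_sub_sub_succ (ι := ι) (u := t - n + j - 1) hj hjn
  rw [show t - (n : ℤ) + j - 1 + (n - j) = t - 1 by ring] at hbar
  have hbj : ∀ u, E u = j + 1 → b < j := fun u hu => by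
    have := hE.lt u
    lia
  rcases stepCoeff_cases E t j with ⟨hx, -⟩ | ⟨hx, htop, htop'⟩ | hx <;>
  rcases stepCoeff_cases E (t - n + j) (2 * n - j) with ⟨hy, -⟩ | ⟨hy, hbot, hbot'⟩ | hy <;>
  rw [hx, hy] at hneg ⊢ <;> norm_num at hneg
  · have hlower := hE.lower htop' (hbj _ htop') (by rwa [sub_add_cancel])
    refine ⟨(E.update (t - 1) j).update (t - n + j - 1) (2 * n - j),
      hlower.lower ?_ (by lia) ?_, ?_⟩
    · rw [Finsupp.update_apply, if_neg (by lia), hbot']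
    · rw [Finsupp.update_apply, sub_add_cancel]
      split_ifs
      exacts [by lia, hbot]
    · rw [columnForm_update, columnForm_update, Finsupp.update_apply, if_neg (by lia), htop', hbot',
        ← neg_sub (entryBox ι n _ j), ← neg_sub (entryBox ι n _ (2 * n - j)), hbox, hbar]
      module
  · refine ⟨E.update (t - 1) j, hE.lower htop' (hbj _ htop') (by rwa [sub_add_cancel]), ?_⟩
    rw [columnForm_update, htop', ← neg_sub (entryBox ι n _ j), hbox]
    module
  · refine ⟨E.update (t - n + j - 1) (2 * n - j),
      hE.lower hbot' (by lia) (by rwa [sub_add_cancel]), ?_⟩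
    rw [columnForm_update, hbot', ← neg_sub (entryBox ι n _ (2 * n - j)), hbar]
    module

theorem exists_raise_self (hbn : b < n)
    (hpos : 0 < stepCoeff E t n + stepCoeff E (t - n + n) (2 * n - n)) :
    ∃ E', IsColumn b n s k E' ∧ columnForm ι n E' = columnForm ι n E -
      (stepCoeff E t n + stepCoeff E (t - n + n) (2 * n - n)) • shiftedBeta ι n t n := by
  rw [sub_add_cancel, show 2 * n - n = n by lia] at hpos ⊢
  rcases stepCoeff_cases E t n with ⟨hx, hn, hbelow⟩ | ⟨hx, -⟩ | hx <;>
  rw [hx] at hpos ⊢ <;> norm_num at hpos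
  refine ⟨E.update t (n + 1), hE.raise hn (by lia) (by lia) hbelow, ?_⟩
  rw [columnForm_update, hn, entryBox_self_sub_succ (by lia)]
  module

theorem exists_lower_self (hbn : b < n)
    (hneg : stepCoeff E t n + stepCoeff E (t - n + n) (2 * n - n) < 0) :
    ∃ E', IsColumn b n s k E' ∧ columnForm ι n E' = columnForm ι n E -
      (stepCoeff E t n + stepCoeff E (t - n + n) (2 * n - n)) • shiftedBeta ι n (t - 1) n := by
  rw [sub_add_cancel, show 2 * n - n = n by lia] at hneg ⊢
  rcases stepCoeff_cases E t n with ⟨hx, -⟩ | ⟨hx, habove, hn⟩ | hx <;>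
  rw [hx] at hneg ⊢ <;> norm_num at hneg
  refine ⟨E.update (t - 1) n, hE.lower hn hbn (by rwa [sub_add_cancel]), ?_⟩
  rw [columnForm_update, hn, ← neg_sub (entryBox ι n _ n), entryBox_self_sub_succ (by lia)]
  module

end IsColumn

section Tableaux

/-- The column of height `k` with lowest slot `s` and entries `f 1, …, f k` from the top down. -/
noncomputable def columnOfEntries (s : ℤ) (k : ℕ) (f : ℕ → ℕ) : ℤ →₀ ℕ :=
  Finsupp.onFinset (Finset.Ico s (s + k))
    (fun u => if s ≤ u ∧ u < s + k then f (s + k - u).toNat else 0)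
    fun _ hu => Finset.mem_Ico.2 (of_not_not fun h => hu (if_neg h))

theorem columnOfEntries_apply {f : ℕ → ℕ} :
    columnOfEntries s k f u = if s ≤ u ∧ u < s + k then f (s + k - u).toNat else 0 := rfl

theorem columnForm_columnOfEntries (f : ℕ → ℕ) :
    columnForm ι n (columnOfEntries s k f) = tab (entryBox ι n) s k f := by
  have hsupp : (columnOfEntries s k f).support ⊆ Finset.Ico s (s + k) :=
    Finsupp.support_onFinset_subset
  rw [columnForm, Finsupp.sum_of_support_subset _ hsupp _ fun _ _ => entryBox_zero, tab]
  refine (Finset.sum_nbij' (fun i : ℕ => s + k - i) (fun u => (s + k - u).toNat)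
    ?_ ?_ ?_ ?_ ?_).symm
  · simp only [Finset.mem_Icc, Finset.mem_Ico]
    lia
  · simp only [Finset.mem_Icc, Finset.mem_Ico]
    lia
  · simp only [Finset.mem_Icc]
    lia
  · simp only [Finset.mem_Ico]
    lia
  · simp only [Finset.mem_Icc, columnOfEntries_apply]
    intro i hi
    rw [if_pos (by lia), show (s + k - (s + k - (i : ℤ))).toNat = i by lia]

theorem isColumn_columnOfEntries {f : ℕ → ℕ} (hf : ∀ i, 1 ≤ i → i ≤ k → b < f i ∧ f i ≤ 2 * n)
    (hlt : ∀ i, 1 ≤ i → i < k → f i < f (i + 1)) :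
    IsColumn b n s k (columnOfEntries s k f) := by
  refine ⟨fun u => ?_, fun u => ?_, fun u => ?_, fun u => ?_⟩ <;>
    simp only [columnOfEntries_apply]
  · have := hf (s + k - u).toNat
    split_ifs <;> lia
  · have := hf (s + k - u).toNat
    split_ifs <;> lia
  · have := hf (s + k - u).toNat
    split_ifs <;> lia
  · split_ifs with hu hnext <;> intro hne
    · have := hlt (s + k - (u + 1)).toNat (by lia) (by lia)
      rwa [show (s + k - (u + 1)).toNat + 1 = (s + k - u).toNat by lia] at this
    · exact hne.bot_lt
    · exact absurd rfl hne
    · exact absurd rfl hne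

theorem IsColumn.eq_columnOfEntries (hE : IsColumn b n s k E) :
    E = columnOfEntries s k fun i => E (s + k - i) := by
  ext u
  rw [columnOfEntries_apply]
  split_ifs with hu
  · congr 1
    lia
  · exact of_not_not fun hne => hu ((hE.ne_zero_iff u).1 hne)

theorem exists_isColumn_iff_exists_tab {φ : ℕ → ℚ} :
    (∃ E, IsColumn b n s k E ∧ columnForm ι n E = φ) ↔
      ∃ f : ℕ → ℕ, (∀ i, 1 ≤ i → i ≤ k → b < f i ∧ f i ≤ 2 * n) ∧
        (∀ i, 1 ≤ i → i < k → f i < f (i + 1)) ∧ tab (boxC ι n) s k f = φ := by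
  have htab : ∀ f : ℕ → ℕ, (∀ i, 1 ≤ i → i ≤ k → b < f i ∧ f i ≤ 2 * n) →
      tab (boxC ι n) s k f = columnForm ι n (columnOfEntries s k f) := fun f hf => by
    rw [columnForm_columnOfEntries]
    refine Finset.sum_congr rfl fun i hi => ?_
    obtain ⟨h1, hk⟩ := Finset.mem_Icc.1 hi
    exact boxC_eq_entryBox (Nat.one_le_of_lt (hf i h1 hk).1) (hf i h1 hk).2
  constructor
  · rintro ⟨E, hE, rfl⟩
    have hf : ∀ i : ℕ, 1 ≤ i → i ≤ k → b < E (s + k - i) ∧ E (s + k - i) ≤ 2 * n :=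
      fun i h1 hk => ⟨hE.lt _ ((hE.ne_zero_iff _).2 (by lia)), hE.le _⟩
    refine ⟨fun i => E (s + k - i), hf, fun i h1 hk => ?_, ?_⟩
    · have := hE.succ_lt (s + k - (i + 1 : ℕ)) ((hE.ne_zero_iff _).2 (by lia))
      rwa [show s + k - ((i + 1 : ℕ) : ℤ) + 1 = s + k - i by lia] at this
    · rw [htab _ hf, ← hE.eq_columnOfEntries]
  · rintro ⟨f, hf, hlt, rfl⟩
    exact ⟨_, isColumn_columnOfEntries hf hlt, (htab f hf).symm⟩

theorem tab_succ (box : ℤ → ℕ → ℕ → ℚ) (s : ℤ) (k : ℕ) (f : ℕ → ℕ) :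
    tab box s (k + 1) f = box (s + k) (f 1) + tab box s k fun i => f (i + 1) := by
  rw [tab, ← Finset.add_sum_Ioc_eq_sum_Icc (by lia), ← Finset.Icc_add_one_left_eq_Ioc,
    ← Finset.map_add_right_Icc, Finset.sum_map, tab]
  simp only [addRightEmbedding_apply, Nat.cast_add, Nat.cast_one, add_sub_add_right_eq_sub,
    add_sub_cancel_right, ← add_assoc]

/-- The forms of the ordinary columns of type C. -/
def columnForms (ι : ℕ → ℕ) (n : ℕ) : Set (ℕ → ℚ) :=
  {φ | ∃ (k : ℕ) (s : ℤ), (1 ≤ k ∧ k < n ∧ 1 ≤ s + PABC ι n k) ∧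
    ∃ E, IsColumn 0 n s k E ∧ columnForm ι n E = φ}

/-- The forms of the spin columns of type C, whose topmost entry is the symbol `ovl(n+1)`. -/
def spinForms (ι : ℕ → ℕ) (n : ℕ) : Set (ℕ → ℚ) :=
  {φ | ∃ (k : ℕ) (s : ℤ), 1 ≤ s + PABC ι n n ∧
    ∃ E, IsColumn n n s k E ∧ shiftedX ι n (s + k) n + columnForm ι n E = φ}

theorem IsColumn.height_le (hE : IsColumn n n s k E) : k ≤ n := by
  rcases Nat.eq_zero_or_pos k with rfl | hk
  · exact n.zero_le
  · have := hE.add_le_apply hk le_rfl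
    have := hE.le (s + k - k)
    lia

theorem tab_cons {f : ℕ → ℕ} :
    tab (boxC ι n) s (k + 1) (fun i => if i ≤ 1 then 0 else f (i - 1)) =
      shiftedX ι n (s + k) n + tab (boxC ι n) s k f := by
  rw [tab_succ, if_pos le_rfl, boxC, if_pos rfl, ← shiftedX]
  refine congrArg _ (Finset.sum_congr rfl fun i hi => ?_)
  have := (Finset.mem_Icc.1 hi).1
  simp only [if_neg (show ¬ i + 1 ≤ 1 by lia), Nat.add_sub_cancel]

theorem TabC_eq_columnForms_union_spinForms (ι : ℕ → ℕ) (n : ℕ) :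
    TabC ι n = columnForms ι n ∪ spinForms ι n := by
  simp only [columnForms, spinForms, exists_isColumn_iff_exists_tab, ← eq_sub_iff_add_eq']
  ext φ
  constructor
  · rintro ⟨k, s, f, ⟨hk, hkn, hf, hlt, hs⟩ | ⟨h1, hk, hkn, hf, hlt, hs⟩, rfl⟩
    · exact .inl ⟨k, s, ⟨hk, by lia, by lia⟩, f, hf, hlt, rfl⟩
    · obtain ⟨k, rfl⟩ := Nat.exists_eq_add_of_le' hk
      refine .inr ⟨k, s, by lia, fun i => f (i + 1),
        fun i hi hik => hf (i + 1) (by lia) (by lia),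
        fun i hi hik => hlt (i + 1) (by lia) (by lia), ?_⟩
      rw [tab_succ, h1, boxC, if_pos rfl, ← shiftedX, add_sub_cancel_left]
  · rintro (⟨k, s, ⟨hk, hkn, hs⟩, f, hf, hlt, rfl⟩ | ⟨k, s, hs, f, hf, hlt, hφ⟩)
    · exact ⟨k, s, f, .inl ⟨hk, by lia, hf, hlt, by lia⟩, rfl⟩
    · have hkn : k ≤ n := (isColumn_columnOfEntries (s := s) hf hlt).height_le
      refine ⟨k + 1, s, fun i => if i ≤ 1 then 0 else f (i - 1), .inr ⟨rfl, by lia, by lia,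
        fun i hi hik => ?_, fun i hi hik => ?_, by lia⟩, ?_⟩
      · simp only [if_neg (show ¬ i ≤ 1 by lia)]
        exact hf (i - 1) (by lia) (by lia)
      · obtain ⟨i, rfl⟩ := Nat.exists_eq_add_of_le' hi
        simpa using hlt (i + 1) (by lia) (by lia)
      · rw [tab_cons, hφ, add_sub_cancel]

end Tableaux

end Columns

section Closure

variable {ι : ℕ → ℕ} {b n k j : ℕ} {s t u : ℤ} {E : ℤ →₀ ℕ}

theorem columnForm_columnOfEntries_id (ι : ℕ → ℕ) (n : ℕ) (s : ℤ) (k : ℕ) :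
    columnForm ι n (columnOfEntries s k id) = foldX ι n s k := by
  have hsum (m : ℕ) : ∑ i ∈ Finset.Icc 1 m, entryBox ι n (s + k - i) i =
      foldX ι n (s + k - m) m := by
    induction m with
    | zero => simp [foldX]
    | succ m ih =>
      rw [Finset.sum_Icc_succ_top (by lia), ih, entryBox, if_neg m.succ_ne_zero,
        Nat.add_sub_cancel, show s + k - ((m + 1 : ℕ) : ℤ) + 1 = s + k - m by lia,
        add_sub_cancel]
  rw [columnForm_columnOfEntries, tab]
  exact (hsum k).trans (by rw [add_sub_cancel_right])

theorem shiftedX_mem_columnForms_union_spinForms (h : IsShiftedIndex ι n t j) :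
    shiftedX ι n t j ∈ columnForms ι n ∪ spinForms ι n := by
  rcases h.le.lt_or_eq with hjn | rfl
  · refine .inl ⟨j, t, ⟨h.one_le, hjn, h.one_le_add⟩, columnOfEntries t j id,
      isColumn_columnOfEntries ?_ ?_, ?_⟩
    · simp only [id]
      lia
    · simp only [id]
      lia
    · rw [columnForm_columnOfEntries_id, foldX_of_lt hjn]
  · refine .inr ⟨0, t, h.one_le_add, 0, ⟨?_, ?_, ?_, ?_⟩, ?_⟩
    · simp
    · simp
    · simp
    · simp
    · simp [columnForm]

theorem Sop_mem_columnForms (hι : Admissible n ι) (hA : Adapted n (cartanC n) ι)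
    (h : IsShiftedIndex ι n t j) {φ : ℕ → ℚ} (hφ : φ ∈ columnForms ι n) :
    Sop (cartanC n) ι (shiftedPos ι n t j) φ ∈ columnForms ι n := by
  obtain ⟨k, s, hks, E, hE, rfl⟩ := hφ
  refine ⟨k, s, hks, ?_⟩
  refine Sop_shiftedPos_mem hι hA h (S := {φ | ∃ E, IsColumn 0 n s k E ∧ columnForm ι n E = φ})
    ⟨E, hE, rfl⟩ ?_ ?_ <;> rw [columnForm_apply_shiftedPos hι h hE.le]
  all_goals rcases h.le.lt_or_eq with hjn | rfl
  · exact hE.exists_raise h.one_le hjn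
  · exact hE.exists_raise_self h.one_le
  · exact hE.exists_lower (.inl rfl) h.one_le hjn
  · exact hE.exists_lower_self h.one_le

theorem shiftedX_add_entryBox (hn : 1 ≤ n) :
    shiftedX ι n (u + 1) n + entryBox ι n u (n + 1) + shiftedBeta ι n u n = shiftedX ι n u n := by
  rw [entryBox, if_neg (by lia), Nat.add_sub_cancel, foldX_succ_self hn, foldX_self, shiftedBeta,
    shiftedX_succ_self]
  module

namespace IsColumn

theorem insert_top (hE : IsColumn n n s k E) (hn : 1 ≤ n) (htop : E (s + k - 1) ≠ n + 1) :
    IsColumn n n s (k + 1) (E.update (s + k) (n + 1)) := by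
  have hne := hE.ne_zero_iff
  refine ⟨fun v => ?_, fun v => ?_, fun v => ?_, fun v => ?_⟩ <;>
    simp only [Finsupp.update_apply]
  · have := hne v
    split_ifs <;> lia
  · have := hE.le v
    split_ifs <;> lia
  · have := hE.lt v
    split_ifs <;> lia
  · have := hE.lt v
    have := hE.succ_lt v
    have := hne (v + 1)
    split_ifs with hv hnext <;> [lia; lia; skip; lia]
    obtain rfl : v = s + k - 1 := by lia
    lia

theorem delete_top (hE : IsColumn n n s (k + 1) E) :
    IsColumn n n s k (E.update (s + k) 0) := by
  refine ⟨fun v => ?_, fun v => ?_, fun v => ?_, fun v => ?_⟩ <;>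
    simp only [Finsupp.update_apply]
  · have := hE.ne_zero_iff v
    split_ifs <;> lia
  · have := hE.le v
    split_ifs <;> lia
  · have := hE.lt v
    split_ifs <;> lia
  · have := hE.succ_lt v
    split_ifs <;> lia

theorem apply_top (hE : IsColumn b n s k E) : E (s + k) = 0 :=
  of_not_not fun h => (((hE.ne_zero_iff _).1 h).2).false

theorem columnForm_delete_top (hE : IsColumn n n s (k + 1) E) (htop : E (s + k) = n + 1) :
    shiftedX ι n (s + k) n + columnForm ι n (E.update (s + k) 0) =
      shiftedX ι n (s + (k + 1 : ℕ)) n + columnForm ι n E + shiftedBeta ι n (s + k) n := by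
  have hn : 1 ≤ n := by
    have := hE.le (s + k)
    lia
  rw [columnForm_update, htop, entryBox_zero, ← shiftedX_add_entryBox hn, Nat.cast_succ,
    add_assoc s]
  abel

theorem columnForm_insert_top (hE : IsColumn n n s k E) (hn : 1 ≤ n) :
    shiftedX ι n (s + (k + 1 : ℕ)) n + columnForm ι n (E.update (s + k) (n + 1)) =
      shiftedX ι n (s + k) n + columnForm ι n E - shiftedBeta ι n (s + k) n := by
  rw [columnForm_update, hE.apply_top, entryBox_zero, ← shiftedX_add_entryBox (u := s + k) hn,
    Nat.cast_succ, add_assoc s]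
  abel

end IsColumn

theorem spinForm_apply_shiftedPos (hι : Admissible n ι) (h : IsShiftedIndex ι n t n)
    (hE : IsColumn n n s k E) :
    (shiftedX ι n (s + k) n + columnForm ι n E) (shiftedPos ι n t n) =
      if t = s + k then (if E (t - 1) = n + 1 then -1 else 1) else 0 := by
  have hn : E t ≠ n := fun htn => by
    have := hE.lt t
    have := h.one_le
    lia
  have htop : E (t - 1) = n + 1 → t = s + k := fun hprev => by
    have := (hE.ne_zero_iff (t - 1)).1 (by lia)
    have hlt := hE.succ_lt (t - 1) (by lia)
    rw [sub_add_cancel] at hlt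
    have := hE.lt t
    have := (hE.ne_zero_iff t).not.1 (by lia)
    lia
  rw [Pi.add_apply, shiftedX_apply_shiftedPos hι h, columnForm_apply_shiftedPos hι h hE.le,
    sub_add_cancel, show 2 * n - n = n by lia, stepCoeff, if_neg hn]
  split_ifs <;> first | lia | norm_num

theorem Sop_mem_spinForms (hι : Admissible n ι) (hA : Adapted n (cartanC n) ι)
    (h : IsShiftedIndex ι n t j) {φ : ℕ → ℚ} (hφ : φ ∈ spinForms ι n) :
    Sop (cartanC n) ι (shiftedPos ι n t j) φ ∈ spinForms ι n := by
  obtain ⟨k, s, hs, E, hE, rfl⟩ := hφ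
  refine Sop_shiftedPos_mem hι hA h ⟨k, s, hs, E, hE, rfl⟩ ?_ ?_
  all_goals rcases h.le.lt_or_eq with hjn | rfl
  · rw [Pi.add_apply, shiftedX_apply_shiftedPos hι h, if_neg (by lia), zero_add,
      columnForm_apply_shiftedPos hι h hE.le]
    intro hpos
    obtain ⟨E', hE', hform⟩ := hE.exists_raise (ι := ι) h.one_le hjn hpos
    exact ⟨k, s, hs, E', hE', by rw [hform, add_sub_assoc]⟩
  · rw [spinForm_apply_shiftedPos hι h hE]
    split_ifs with ht htop <;> intro hpos <;> norm_num at hpos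
    subst ht
    rw [one_smul, ← hE.columnForm_insert_top h.one_le]
    exact ⟨k + 1, s, hs, _, hE.insert_top h.one_le htop, rfl⟩
  · rw [Pi.add_apply, shiftedX_apply_shiftedPos hι h, if_neg (by lia), zero_add,
      columnForm_apply_shiftedPos hι h hE.le]
    intro hneg
    obtain ⟨E', hE', hform⟩ := hE.exists_lower (ι := ι) (.inr rfl) h.one_le hjn hneg
    exact ⟨k, s, hs, E', hE', by rw [hform, add_sub_assoc]⟩
  · rw [spinForm_apply_shiftedPos hι h hE]
    split_ifs with ht htop <;> intro hneg <;> norm_num at hneg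
    subst ht
    obtain ⟨k, rfl⟩ : ∃ l, k = l + 1 := by
      have := (hE.ne_zero_iff _).1 (htop.trans_ne (by lia))
      exact ⟨k - 1, by lia⟩
    rw [show s + ((k + 1 : ℕ) : ℤ) - 1 = s + k by lia] at htop ⊢
    rw [neg_smul, one_smul, sub_neg_eq_add, ← hE.columnForm_delete_top htop]
    exact ⟨k, s, hs, _, hE.delete_top, rfl⟩

theorem Xi_subset_columnForms_union_spinForms (hι : Admissible n ι)
    (hA : Adapted n (cartanC n) ι) :
    Xi (cartanC n) ι ⊆ columnForms ι n ∪ spinForms ι n := by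
  intro φ hφ
  induction hφ with
  | base p hp =>
    obtain ⟨t, j, h, rfl⟩ := exists_shiftedPos_eq hι hp
    rw [h.xc_shiftedPos]
    exact shiftedX_mem_columnForms_union_spinForms h
  | step p hp φ _ ih =>
    obtain ⟨t, j, h, rfl⟩ := exists_shiftedPos_eq hι hp
    exact ih.imp (Sop_mem_columnForms hι hA h) (Sop_mem_spinForms hι hA h)

end Closure

section Reachability

variable {ι : ℕ → ℕ} {b n k j e : ℕ} {s t u : ℤ} {E : ℤ →₀ ℕ} {ψ : ℕ → ℚ}

theorem isShiftedIndex_of_le (hs : 1 ≤ s + PABC ι n k) (hkn : k ≤ n) (hj : 1 ≤ j) (hjn : j ≤ n)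
    (hsu : s ≤ u) (hju : s + k - j ≤ u) : IsShiftedIndex ι n u j := by
  refine ⟨hj, hjn, ?_⟩
  rcases le_total j k with hjk | hkj
  · have := (PABC_mem_Icc (ι := ι) hjk hkn).2
    lia
  · have := (PABC_mem_Icc (ι := ι) hkj hjn).1
    lia

/-- The termination measure of the reachability argument. An entry `e` counts `2 * e` up to `n` and
`e + n` beyond, so that lowering an unbarred entry outweighs raising a barred one. -/
def columnWeight (n : ℕ) (E : ℤ →₀ ℕ) : ℕ := E.sum fun _ e => e + min e n

theorem columnWeight_update (n : ℕ) (E : ℤ →₀ ℕ) (u : ℤ) (e : ℕ) :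
    columnWeight n (E.update u e) + (E u + min (E u) n) = columnWeight n E + (e + min e n) :=
  sum_update_add (g := fun _ e => e + min e n) E u e fun _ => by simp

theorem columnWeight_update_lt (he : e < E u) :
    columnWeight n (E.update u e) < columnWeight n E := by
  have := columnWeight_update n E u e
  lia

namespace IsColumn

theorem stepCoeff_eq_zero (hE : IsColumn b n s k E) (hu : E u = e + 1) : stepCoeff E u e = 0 := by
  have hbelow : E (u - 1) ≠ e + 1 := fun h => by
    have := hE.lt_of_lt (h.trans_ne e.succ_ne_zero) (sub_one_lt u)
    lia
  rw [stepCoeff, if_neg (by lia), if_neg hbelow, sub_zero]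

theorem xiMem_of_lower_barred (hE : IsColumn b n s k E) (hι : Admissible n ι)
    (hA : Adapted n (cartanC n) ι) (h : IsShiftedIndex ι n (u + (n - j)) j) (hjn : j < n)
    (hψ : ψ (shiftedPos ι n (u + (n - j)) j) = 0) (hu : E u = 2 * n - j + 1)
    (hcoeff : stepCoeff E (u + (n - j)) j = 0)
    (hXi : XiMem (cartanC n) ι (ψ + columnForm ι n (E.update u (2 * n - j)))) :
    XiMem (cartanC n) ι (ψ + columnForm ι n E) := by
  refine .of_add_smul_shiftedBeta hι hA h one_pos ?_ ?_
  · rw [Pi.add_apply, hψ, columnForm_apply_shiftedPos hι h hE.le, hcoeff,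
      show u + ((n : ℤ) - j) - n + j = u by ring, hE.stepCoeff_eq_zero hu, zero_add, zero_add]
  · convert hXi using 1
    rw [columnForm_update, hu, ← neg_sub (entryBox ι n u (2 * n - j)),
      entryBox_two_mul_sub_sub_succ h.one_le hjn]
    module

end IsColumn

/-- The slot `u` is the topmost slot of `E` whose entry `e + 1` is not the least one possible
there. The entry of slot `v` is at least `s + k - v`. -/
structure IsTopmost (s : ℤ) (k : ℕ) (E : ℤ →₀ ℕ) (u : ℤ) (e : ℕ) : Prop where
  le : s ≤ u
  lt_add : u < s + k
  apply_eq : E u = e + 1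
  sub_le : s + k - u ≤ e
  above : ∀ v, u < v → v ≤ s + k → E v = s + k - v

theorem IsTopmost.columnWeight_update_lt (htop : IsTopmost s k E u e) :
    columnWeight n (E.update u e) < columnWeight n E :=
  _root_.columnWeight_update_lt (htop.apply_eq ▸ e.lt_succ_self)

/-- `E` belongs to `Ξ` as soon as all lighter columns of the same shape do. -/
def IsReducible (ι : ℕ → ℕ) (n : ℕ) (s : ℤ) (k : ℕ) (E : ℤ →₀ ℕ) : Prop :=
  ∃ E', IsColumn 0 n s k E' ∧ columnWeight n E' < columnWeight n E ∧
    (XiMem (cartanC n) ι (columnForm ι n E') → XiMem (cartanC n) ι (columnForm ι n E))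

namespace IsColumn

theorem exists_isTopmost (hE : IsColumn 0 n s k E) (hne : E ≠ columnOfEntries s k id) :
    ∃ u e, IsTopmost s k E u e := by
  have hexists : ∃ u, (s ≤ u ∧ u < s + k) ∧ (E u : ℤ) ≠ s + k - u := by
    by_contra! hall
    refine hne (Finsupp.ext fun u => ?_)
    have := hE.ne_zero_iff u
    have := hall u
    rw [columnOfEntries_apply]
    simp only [id]
    split_ifs <;> lia
  obtain ⟨u, ⟨hu, hneu⟩, hmax⟩ := Int.exists_greatest_of_bdd ⟨s + k, fun v hv => hv.1.2.le⟩ hexists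
  have hle := hE.add_le_apply (d := (s + k - u).toNat) (by lia) (by lia)
  rw [show s + k - ((s + k - u).toNat : ℤ) = u by lia] at hle
  refine ⟨u, E u - 1, hu.1, hu.2, by lia, by lia, fun v huv hv => ?_⟩
  rcases hv.lt_or_eq with hv | rfl
  · by_contra hnev
    exact huv.not_ge (hmax v ⟨⟨by lia, hv⟩, hnev⟩)
  · rw [hE.apply_top, sub_self, Nat.cast_zero]

variable (hE : IsColumn 0 n s k E) (htop : IsTopmost s k E u e)
include hE htop

theorem lower_topmost : IsColumn 0 n s k (E.update u e) := by
  have hlt := htop.lt_add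
  have hle := htop.sub_le
  refine hE.lower htop.apply_eq (by lia) fun h => ?_
  have := htop.above (u + 1) (by lia) (by lia)
  lia

theorem stepCoeff_above_topmost (hj : 1 ≤ j) (hjn : j < n) (hkn : k < n) (hen : n < e) :
    stepCoeff E (u + (n - j)) j = 0 := by
  have habove (v : ℤ) (huv : u < v) : (E v : ℤ) = max 0 (s + k - v) := by
    rcases le_or_gt v (s + k) with hv | hv
    · rw [htop.above v huv hv]
      lia
    · have := (hE.ne_zero_iff v).not.2 (by lia)
      lia
  have hle := htop.le
  have hsame : E (u + (n - j)) ≠ j := by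
    have := habove (u + (n - j)) (by lia)
    lia
  have hsucc : E (u + (n - j) - 1) ≠ j + 1 := by
    rcases (show u ≤ u + (n - j) - 1 by lia).eq_or_lt with h | h
    · rw [← h, htop.apply_eq]
      lia
    · have := habove _ h
      lia
  rw [stepCoeff, if_neg hsame, if_neg hsucc, sub_zero]

theorem isReducible_of_barred (hι : Admissible n ι) (hA : Adapted n (cartanC n) ι) (hkn : k < n)
    (hs : 1 ≤ s + PABC ι n k) (hen : n < e) : IsReducible ι n s k E := by
  refine ⟨_, hE.lower_topmost htop, htop.columnWeight_update_lt, fun hXi => ?_⟩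
  have hle := htop.le
  have hu := htop.apply_eq
  have he := hE.le u
  obtain ⟨j, rfl⟩ : ∃ j, e = 2 * n - j := ⟨2 * n - e, by lia⟩
  have hcoeff := hE.stepCoeff_above_topmost htop (j := j) (by lia) (by lia) hkn hen
  simpa using hE.xiMem_of_lower_barred (ψ := 0) hι hA
    (isShiftedIndex_of_le hs hkn.le (by lia) (by lia) (by lia) (by lia)) (by lia) rfl hu hcoeff
    (by simpa using hXi)

theorem isReducible_of_self (hι : Admissible n ι) (hA : Adapted n (cartanC n) ι) (hkn : k < n)
    (hs : 1 ≤ s + PABC ι n k) (hen : e = n) : IsReducible ι n s k E := by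
  refine ⟨_, hE.lower_topmost htop, htop.columnWeight_update_lt, fun hXi => ?_⟩
  subst hen
  have hle := htop.sub_le
  have h : IsShiftedIndex ι e u e :=
    isShiftedIndex_of_le hs hkn.le (by lia) le_rfl htop.le (by lia)
  refine .of_add_smul_shiftedBeta hι hA h two_pos ?_ ?_
  · rw [columnForm_apply_shiftedPos hι h hE.le, sub_add_cancel, show 2 * e - e = e by lia,
      hE.stepCoeff_eq_zero htop.apply_eq, zero_add]
  · convert hXi using 1
    rw [columnForm_update, htop.apply_eq, ← neg_sub (entryBox ι e u e),
      entryBox_self_sub_succ h.one_le]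
    module

/-- When the barred entry moving along the same `β` as the topmost one can be raised, lowering one
and raising the other leaves the form unchanged. -/
theorem isReducible_of_raisable_barred (hen : e < n) (hw : E (u - n + e) = 2 * n - e)
    (hw' : E (u - n + e - 1) ≠ 2 * n - e + 1) : IsReducible ι n s k E := by
  have he : 1 ≤ e := by
    have := htop.lt_add
    have := htop.sub_le
    lia
  set E' := (E.update u e).update (u - n + e) (2 * n - e + 1)
  have hform : columnForm ι n E' = columnForm ι n E := by
    have hbox := entryBox_sub_succ (ι := ι) (u := u) he hen
    have hbar := entryBox_two_mul_sub_sub_succ (ι := ι) (u := u - n + e) he hen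
    rw [show u - (n : ℤ) + e + (n - e) = u by ring] at hbar
    rw [columnForm_update, columnForm_update, Finsupp.update_apply, if_neg (by lia),
      htop.apply_eq, hw, hbar, ← neg_sub (entryBox ι n u e), hbox]
    module
  refine ⟨E', (hE.lower_topmost htop).raise ?_ (by lia) (by lia) ?_, ?_, hform ▸ id⟩
  · rwa [Finsupp.update_apply, if_neg (by lia)]
  · rwa [Finsupp.update_apply, if_neg (by lia)]
  · have hlower := columnWeight_update n E u e
    have hraise := columnWeight_update n (E.update u e) (u - n + e) (2 * n - e + 1)
    rw [Finsupp.update_apply, if_neg (by lia), hw] at hraise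
    rw [htop.apply_eq] at hlower
    lia

theorem isReducible_of_lowerable_barred (hι : Admissible n ι) (hA : Adapted n (cartanC n) ι)
    (hkn : k < n) (hs : 1 ≤ s + PABC ι n k) (hen : e < n)
    (hw : E (u - n + e - 1) = 2 * n - e + 1) (hw' : E (u - n + e) ≠ 2 * n - e) :
    IsReducible ι n s k E := by
  have hlt := htop.lt_add
  have hle := htop.sub_le
  have hmem := (hE.ne_zero_iff _).1 (hw.trans_ne (Nat.succ_ne_zero _))
  have hbelow (v : ℤ) (hv : v < u) : E v ≠ 0 → e + 1 < E v :=
    fun hne => htop.apply_eq ▸ hE.lt_of_lt hne hv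
  have hslot : u - n + e - 1 + (n - e) = u - 1 := by ring
  have hcoeff : stepCoeff E (u - 1) e = 0 := by
    have := hbelow (u - 1)
    have := hbelow (u - 1 - 1)
    rw [stepCoeff, if_neg (by lia), if_neg (by lia), sub_zero]
  refine ⟨E.update (u - n + e - 1) (2 * n - e),
    hE.lower hw (by lia) (by rwa [sub_add_cancel]), columnWeight_update_lt (by lia), fun hXi => ?_⟩
  simpa using hE.xiMem_of_lower_barred (ψ := 0) hι hA
    (isShiftedIndex_of_le hs hkn.le (by lia) hen.le (by lia) (by lia)) hen rfl hw
    (hslot ▸ hcoeff) (by simpa using hXi)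

theorem isReducible_of_unbarred (hι : Admissible n ι) (hA : Adapted n (cartanC n) ι)
    (hkn : k < n) (hs : 1 ≤ s + PABC ι n k) (hen : e < n) : IsReducible ι n s k E := by
  rcases stepCoeff_cases E (u - n + e) (2 * n - e) with
    ⟨-, hw, hw'⟩ | ⟨-, hw', hw⟩ | hcoeff
  · exact hE.isReducible_of_raisable_barred htop hen hw hw'
  · exact hE.isReducible_of_lowerable_barred htop hι hA hkn hs hen hw hw'
  refine ⟨_, hE.lower_topmost htop, htop.columnWeight_update_lt, fun hXi => ?_⟩
  have hlt := htop.lt_add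
  have hle := htop.sub_le
  have h : IsShiftedIndex ι n u e :=
    isShiftedIndex_of_le hs hkn.le (by lia) hen.le htop.le (by lia)
  refine .of_add_smul_shiftedBeta hι hA h one_pos ?_ ?_
  · rw [columnForm_apply_shiftedPos hι h hE.le, hE.stepCoeff_eq_zero htop.apply_eq, hcoeff,
      zero_add]
  · convert hXi using 1
    rw [columnForm_update, htop.apply_eq, ← neg_sub (entryBox ι n u e),
      entryBox_sub_succ h.one_le hen]
    module

end IsColumn

theorem columnForms_subset_Xi (hι : Admissible n ι) (hA : Adapted n (cartanC n) ι) :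
    columnForms ι n ⊆ Xi (cartanC n) ι := by
  rintro _ ⟨k, s, ⟨hk, hkn, hs⟩, E, hE, rfl⟩
  induction hw : columnWeight n E using Nat.strong_induction_on generalizing E with
  | _ w ih =>
    by_cases hbase : E = columnOfEntries s k id
    · have h : IsShiftedIndex ι n s k := ⟨hk, hkn.le, hs⟩
      rw [hbase, columnForm_columnOfEntries_id, foldX_of_lt hkn, ← h.xc_shiftedPos]
      exact .base _ (h.one_le_shiftedPos hι)
    obtain ⟨u, e, htop⟩ := hE.exists_isTopmost hbase
    obtain ⟨E', hE', hlt, hXi⟩ : IsReducible ι n s k E := by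
      rcases lt_trichotomy e n with hen | hen | hen
      · exact hE.isReducible_of_unbarred htop hι hA hkn hs hen
      · exact hE.isReducible_of_self htop hι hA hkn hs hen
      · exact hE.isReducible_of_barred htop hι hA hkn hs hen
    exact hXi (ih _ (hw ▸ hlt) E' hE' rfl)

theorem xiMem_spinForm_of_top (hι : Admissible n ι) (hA : Adapted n (cartanC n) ι)
    (hs : 1 ≤ s + PABC ι n n) (hE : IsColumn n n s (k + 1) E) (htop : E (s + k) = n + 1)
    (hXi : XiMem (cartanC n) ι (shiftedX ι n (s + k) n + columnForm ι n (E.update (s + k) 0))) :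
    XiMem (cartanC n) ι (shiftedX ι n (s + (k + 1 : ℕ)) n + columnForm ι n E) := by
  have h : IsShiftedIndex ι n (s + k) n :=
    isShiftedIndex_of_le hs le_rfl (by have := hE.le (s + k); lia) le_rfl (by lia) (by lia)
  refine .of_add_smul_shiftedBeta hι hA h one_pos ?_ ?_
  · rw [spinForm_apply_shiftedPos hι h hE, if_neg (by lia)]
  · rwa [one_smul, ← hE.columnForm_delete_top htop]

theorem xiMem_spinForm_of_barred (hι : Admissible n ι) (hA : Adapted n (cartanC n) ι)
    (hs : 1 ≤ s + PABC ι n n) (hE : IsColumn n n s k E) (hu : E u = 2 * n - j + 1) (hj : 1 ≤ j)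
    (hjn : j < n) (hXi : XiMem (cartanC n) ι
      (shiftedX ι n (s + k) n + columnForm ι n (E.update u (2 * n - j)))) :
    XiMem (cartanC n) ι (shiftedX ι n (s + k) n + columnForm ι n E) := by
  have hmem := (hE.ne_zero_iff u).1 (hu.trans_ne (Nat.succ_ne_zero _))
  have h : IsShiftedIndex ι n (u + (n - j)) j :=
    isShiftedIndex_of_le hs le_rfl hj hjn.le (by lia) (by lia)
  have hcoeff : stepCoeff E (u + (n - j)) j = 0 := by
    have := hE.lt (u + (n - j))
    have := hE.lt (u + (n - j) - 1)
    rw [stepCoeff, if_neg (by lia), if_neg (by lia), sub_zero]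
  refine hE.xiMem_of_lower_barred hι hA h hjn ?_ hu hcoeff hXi
  rw [shiftedX_apply_shiftedPos hι h, if_neg (by lia)]

theorem spinForms_subset_Xi (hn : 1 ≤ n) (hι : Admissible n ι) (hA : Adapted n (cartanC n) ι) :
    spinForms ι n ⊆ Xi (cartanC n) ι := by
  rintro _ ⟨k, s, hs, E, hE, rfl⟩
  induction hw : columnWeight n E using Nat.strong_induction_on generalizing k E with
  | _ w ih =>
    rcases k with _ | k
    · obtain rfl : E = 0 := Finsupp.ext fun u => by
        have := hE.ne_zero_iff u
        rw [Finsupp.zero_apply]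
        lia
      have h : IsShiftedIndex ι n s n := ⟨hn, le_rfl, hs⟩
      simp only [columnForm, Finsupp.sum_zero_index, Nat.cast_zero, add_zero, ← h.xc_shiftedPos]
      exact .base _ (h.one_le_shiftedPos hι)
    have htop := hE.lt (s + k) ((hE.ne_zero_iff _).2 (by lia))
    have hle := hE.le (s + k)
    rcases (Nat.succ_le_of_lt htop).eq_or_lt with htop | htop
    · exact xiMem_spinForm_of_top hι hA hs hE htop.symm
        (ih _ (hw ▸ columnWeight_update_lt (by lia)) k _ hE.delete_top rfl)
    · obtain ⟨j, hj⟩ : ∃ j, E (s + k) = 2 * n - j + 1 := ⟨2 * n - E (s + k) + 1, by lia⟩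
      have habove : E (s + k + 1) ≠ 2 * n - j := by
        have hzero := hE.apply_top
        rw [Nat.cast_succ, ← add_assoc] at hzero
        lia
      have hlower := hE.lower hj (by lia) habove
      exact xiMem_spinForm_of_barred hι hA hs hE hj (by lia) (by lia)
        (ih _ (hw ▸ columnWeight_update_lt (by lia)) _ _ hlower rfl)

end Reachability

/-- Theorem 3.5 (type C): for an adapted sequence, `Ξ_ι = Tab_{C,ι}`. -/
theorem XiEqTabC (n : ℕ) (hn : 2 ≤ n) (ι : ℕ → ℕ)
    (hadm : Admissible n ι) (hadap : Adapted n (cartanC n) ι) :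
    Xi (cartanC n) ι = TabC ι n := by
  rw [TabC_eq_columnForms_union_spinForms]
  exact (Xi_subset_columnForms_union_spinForms hadm hadap).antisymm <|
    Set.union_subset (columnForms_subset_Xi hadm hadap)
      (spinForms_subset_Xi (by lia) hadm hadap)
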